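/- Let n ≥ 3, 1 ≤ k ≤ n/2, A diagonal in 𝒜_k (with λ_max(A) < 1/2 when k = 1), x₀ ∈ B_{1/2}(0)∖{0}, and fix c ≥ c*. For each 0 < ε < 1/2 let u^ε be the unique k-convex solution of S_k(D²u) = 1 in ℝⁿ∖B̄_ε(x₀), u = 0 on ∂B_ε(x₀), lim_{|x|→∞}(u(x) − (½xᵀAx + c)) = 0, and let ũ^ε be its extension by 0 on B_ε(x₀). Then, as ε → 0⁺, ũ^ε converges to ψ(x) = ½xᵀAx + c in L¹_loc(ℝⁿ) and in C^{0,γ}_loc(ℝⁿ∖{x₀}) for every 0 < γ < 1. -/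

import Mathlib

open scoped Classical Topology
open Real Filter MeasureTheory

noncomputable section

/-- Euclidean space ℝⁿ. -/
abbrev Euc (n : ℕ) : Type := EuclideanSpace ℝ (Fin n)

/-- The standard basis vector `e i`. -/
def ebasis (n : ℕ) (i : Fin n) : Euc n := EuclideanSpace.single i 1

/-- The Hessian matrix `D²u(x)`. -/
def hessMat (n : ℕ) (u : Euc n → ℝ) (x : Euc n) : Matrix (Fin n) (Fin n) ℝ :=
  Matrix.of fun i j => iteratedFDeriv ℝ 2 u x ![ebasis n i, ebasis n j]

/-- The Laplacian `Δu(x)` (trace of the Hessian). -/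
def lapl (n : ℕ) (u : Euc n → ℝ) (x : Euc n) : ℝ := ∑ i, hessMat n u x i i

/-- The `k`-th elementary symmetric function of the eigenvalues of an `n × n` matrix,
expressed through the coefficients of the characteristic polynomial. -/
def matSk (n k : ℕ) (M : Matrix (Fin n) (Fin n) ℝ) : ℝ :=
  (-1 : ℝ) ^ k * (Matrix.charpoly M).coeff (n - k)

/-- `S_k(D²u)(x)`. -/
def SkHess (n k : ℕ) (u : Euc n → ℝ) (x : Euc n) : ℝ := matSk n k (hessMat n u x)

/-- `u` is `k`-convex on `U`: the eigenvalues of the Hessian lie in the Gårding cone `Γ_k`. -/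
def KConvexOn (n k : ℕ) (u : Euc n → ℝ) (U : Set (Euc n)) : Prop :=
  ∀ x ∈ U, ∀ j : ℕ, 1 ≤ j → j ≤ k → 0 < matSk n j (hessMat n u x)

/-- Membership in the class `𝒜_k`: symmetric positive definite with `S_k(λ(A)) = 1`. -/
def MemA (n k : ℕ) (A : Matrix (Fin n) (Fin n) ℝ) : Prop :=
  A.IsSymm ∧ A.PosDef ∧ matSk n k A = 1

/-- The quadratic form `½ xᵀ A x`. -/
def quadA (n : ℕ) (A : Matrix (Fin n) (Fin n) ℝ) (x : Euc n) : ℝ :=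
  (1 / 2) * ∑ i, ∑ j, x i * A i j * x j

/-- The linear form `b ⋅ x`. -/
def linB (n : ℕ) (b x : Euc n) : ℝ := ∑ i, b i * x i

/-- `λ_max(A) < c`, expressed through the quadratic form (for symmetric `A`). -/
def lambdaMaxLT (n : ℕ) (A : Matrix (Fin n) (Fin n) ℝ) (c : ℝ) : Prop :=
  ∀ x : Euc n, x ≠ 0 → ∑ i, ∑ j, x i * A i j * x j < c * ‖x‖ ^ 2

/-- `u` is smooth on an open neighbourhood of the (closed) set `S`;
this is our rendering of `u ∈ C^∞(S)` for a closed set `S`. -/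
def SmoothOnNhd (n : ℕ) (u : Euc n → ℝ) (S : Set (Euc n)) : Prop :=
  ∃ U : Set (Euc n), IsOpen U ∧ S ⊆ U ∧ ContDiffOn ℝ (⊤ : ℕ∞) u U

/-- A smooth bounded strictly convex domain in ℝⁿ. -/
def SmoothStrictConvexDomain (n : ℕ) (Ω : Set (Euc n)) : Prop :=
  IsOpen Ω ∧ Bornology.IsBounded Ω ∧ Ω.Nonempty ∧ Convex ℝ Ω ∧ StrictConvex ℝ Ω ∧
    ∃ f : Euc n → ℝ, ContDiff ℝ (⊤ : ℕ∞) f ∧ Ω = {x | f x < 0} ∧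
      ∀ x ∈ frontier Ω, fderiv ℝ f x ≠ 0

/-- Extension of `u` by the constant value `v` inside `Ω`. -/
def extBy (n : ℕ) (Ω : Set (Euc n)) (v : ℝ) (u : Euc n → ℝ) : Euc n → ℝ :=
  fun x => if x ∈ Ω then v else u x

/-- `u` (vanishing on `∂Ω`) is quasiconvex: all sublevel sets of its zero-extension are convex. -/
def QuasiconvexSol (n : ℕ) (Ω : Set (Euc n)) (u : Euc n → ℝ) : Prop :=
  ∀ t : ℝ, Convex ℝ {x : Euc n | extBy n Ω 0 u x ≤ t}

/-- The `k`-th elementary symmetric polynomial of a vector `a ∈ ℝⁿ`. -/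
def esymmVec (n k : ℕ) (a : Fin n → ℝ) : ℝ :=
  ∑ s ∈ Finset.powersetCard k (Finset.univ : Finset (Fin n)), ∏ i ∈ s, a i

/-- `h_k(a) = max_i S_{k-1}(a)|_{a_i = 0} · a_i`. -/
def hkfun (n k : ℕ) (a : Fin n → ℝ) : ℝ :=
  ⨆ i : Fin n, esymmVec n (k - 1) (Function.update a i 0) * a i

/-- The exponent `-k / (2 h_k(a))`. -/
def genExp (n k : ℕ) (a : Fin n → ℝ) : ℝ := -(k : ℝ) / (2 * hkfun n k a)

/-- The integrand `(1 + α t^{-k/(2h_k(a))})^{1/k}`. -/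
def genInt (n k : ℕ) (a : Fin n → ℝ) (α t : ℝ) : ℝ :=
  (1 + α * t ^ genExp n k a) ^ ((1 : ℝ) / (k : ℝ))

/-- The generalized symmetric function `ū`. -/
def ubar (n k : ℕ) (a : Fin n → ℝ) (R₀ α : ℝ) (x : Euc n) : ℝ :=
  ∫ t in R₀..(quadA n (Matrix.diagonal a) x), genInt n k a α t

/-- `μ(α) = ∫_{R₀}^∞ ((1 + α t^{-k/(2h_k(a))})^{1/k} - 1) dt - R₀`. -/
def muA (n k : ℕ) (a : Fin n → ℝ) (R₀ α : ℝ) : ℝ :=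
  (∫ t in Set.Ioi R₀, (genInt n k a α t - 1)) - R₀

/-- The ellipsoid `E_R(xb) = {x : ½ (x - xb)ᵀ A (x - xb) < R}`. -/
def ESet (n : ℕ) (A : Matrix (Fin n) (Fin n) ℝ) (xb : Euc n) (R : ℝ) : Set (Euc n) :=
  {x : Euc n | quadA n A (x - xb) < R}

/-- The non-concentric convex ring `Ω_R^ε = E_R(0) ∖ B̄_ε(x₀)`. -/
def OmegaRe (n : ℕ) (a : Fin n → ℝ) (x₀ : Euc n) (ε R : ℝ) : Set (Euc n) :=
  ESet n (Matrix.diagonal a) 0 R \ closure (Metric.ball x₀ ε)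

/-- `u` is a `k`-convex solution of the approximating problem
`S_k(D²u) = 1` in `Ω_R^ε`, `u = 0` on `∂B_ε(x₀)`, `u = ū` on `∂E_R(0)`. -/
def ApproxSol (n k : ℕ) (a : Fin n → ℝ) (x₀ : Euc n) (ε R R₀ α : ℝ)
    (u : Euc n → ℝ) : Prop :=
  SmoothOnNhd n u (closure (OmegaRe n a x₀ ε R)) ∧
  KConvexOn n k u (OmegaRe n a x₀ ε R) ∧
  (∀ x ∈ OmegaRe n a x₀ ε R, SkHess n k u x = 1) ∧
  (∀ x ∈ Metric.sphere x₀ ε, u x = 0) ∧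
  (∀ x : Euc n, quadA n (Matrix.diagonal a) x = R → u x = ubar n k a R₀ α x)

/-- The constant `C_ε` of the boundary gradient estimate. -/
def Ceps (n k : ℕ) (C ε : ℝ) : ℝ :=
  if 2 * k < n then C * ((n : ℝ) / (k : ℝ) - 2) * ε⁻¹
  else if 2 * k = n then C * ε⁻¹ * |Real.log ε|⁻¹
  else C * (2 - (n : ℝ) / (k : ℝ)) * ε ^ (1 - (n : ℝ) / (k : ℝ))

/-- `u` is a `k`-convex solution of the exterior Dirichlet problem
`S_k(D²u) = 1` in `ℝⁿ ∖ B̄_ε(x₀)`, `u = 0` on `∂B_ε(x₀)`, with quadratic asymptotics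
`½ xᵀAx + c` at infinity (`A = diag a`). -/
def ExtBallSol (n k : ℕ) (a : Fin n → ℝ) (x₀ : Euc n) (ε c : ℝ) (u : Euc n → ℝ) : Prop :=
  SmoothOnNhd n u (Metric.ball x₀ ε)ᶜ ∧
  KConvexOn n k u (closure (Metric.ball x₀ ε))ᶜ ∧
  (∀ x ∈ (closure (Metric.ball x₀ ε))ᶜ, SkHess n k u x = 1) ∧
  (∀ x ∈ Metric.sphere x₀ ε, u x = 0) ∧
  Tendsto (fun x : Euc n => u x - (quadA n (Matrix.diagonal a) x + c))
    (cocompact (Euc n)) (𝓝 0)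

/-- `u` is a `k`-convex solution of the exterior Dirichlet problem on `ℝⁿ ∖ Ω₀` with
asymptotics `½ xᵀAx + b·x + c` at infinity. -/
def ExtDomSol (n k : ℕ) (Ω₀ : Set (Euc n)) (A : Matrix (Fin n) (Fin n) ℝ) (b : Euc n)
    (c : ℝ) (u : Euc n → ℝ) : Prop :=
  SmoothOnNhd n u Ω₀ᶜ ∧
  KConvexOn n k u (closure Ω₀)ᶜ ∧
  (∀ x ∈ (closure Ω₀)ᶜ, SkHess n k u x = 1) ∧
  (∀ x ∈ frontier Ω₀, u x = 0) ∧
  Tendsto (fun x : Euc n => u x - (quadA n A x + linB n b x + c))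
    (cocompact (Euc n)) (𝓝 0)

/-- `u` is a solution of the exterior Dirichlet problem for the Laplace equation
`Δu = 1` on `ℝⁿ ∖ Ω₀` with asymptotics `½ xᵀAx + b·x + c` at infinity. -/
def ExtDomSolLap (n : ℕ) (Ω₀ : Set (Euc n)) (A : Matrix (Fin n) (Fin n) ℝ) (b : Euc n)
    (c : ℝ) (u : Euc n → ℝ) : Prop :=
  SmoothOnNhd n u Ω₀ᶜ ∧
  (∀ x ∈ (closure Ω₀)ᶜ, lapl n u x = 1) ∧
  (∀ x ∈ frontier Ω₀, u x = 0) ∧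
  Tendsto (fun x : Euc n => u x - (quadA n A x + linB n b x + c))
    (cocompact (Euc n)) (𝓝 0)

/-- `u` solves the exterior problem `Δu = 0` in `ℝⁿ ∖ Ω̄`, `u = 1` on `∂Ω`,
`u → 0` at infinity. -/
def HarmExtSol (n : ℕ) (Ω : Set (Euc n)) (u : Euc n → ℝ) : Prop :=
  SmoothOnNhd n u Ωᶜ ∧
  (∀ x ∈ (closure Ω)ᶜ, lapl n u x = 0) ∧
  (∀ x ∈ frontier Ω, u x = 1) ∧
  Tendsto u (cocompact (Euc n)) (𝓝 0)

end

section VecAlg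
open Polynomial

/-- elementary symmetric function of `l` over the finset `s`, as a coefficient. -/
noncomputable def EE {ι : Type} (l : ι → ℝ) (s : Finset ι) (k : ℕ) : ℝ :=
  (∏ i ∈ s, (1 + C (l i) * X) : ℝ[X]).coeff k

theorem EE_zero {ι : Type} [DecidableEq ι] (l : ι → ℝ) (s : Finset ι) : EE l s 0 = 1 := by
  unfold EE
  rw [Polynomial.coeff_zero_eq_eval_zero, Polynomial.eval_prod]
  simp

theorem EE_insert {ι : Type} [DecidableEq ι] (l : ι → ℝ) (s : Finset ι) (i : ι) (hi : i ∉ s) (k : ℕ) :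
    EE l (insert i s) (k + 1) = EE l s (k + 1) + l i * EE l s k := by
  unfold EE
  rw [Finset.prod_insert hi, add_mul, one_mul, mul_assoc, Polynomial.coeff_add,
    Polynomial.coeff_C_mul, Polynomial.coeff_X_mul]

theorem EE_erase {ι : Type} [DecidableEq ι] (l : ι → ℝ) (s : Finset ι) (i : ι) (hi : i ∈ s) (k : ℕ) :
    EE l s (k + 1) = EE l (s.erase i) (k + 1) + l i * EE l (s.erase i) k := by
  conv_lhs => rw [← Finset.insert_erase hi]
  exact EE_insert l _ i (Finset.notMem_erase i s) k

theorem splits_deriv (p : ℝ[X]) (hp : p.Splits) : p.derivative.Splits := by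
  by_cases h0 : p.natDegree = 0
  · rw [Polynomial.eq_C_of_natDegree_eq_zero h0]
    simp
  rw [Polynomial.splits_iff_card_roots] at hp ⊢
  have h1 := Polynomial.card_roots_le_derivative p
  have h2 := Polynomial.card_roots' p.derivative
  have h3 := Polynomial.natDegree_derivative_lt h0
  omega

theorem splits_deriv_iter (p : ℝ[X]) (hp : p.Splits) (m : ℕ) :
    (Polynomial.derivative^[m] p).Splits := by
  induction m with
  | zero => simpa using hp
  | succ m ih =>
    rw [Function.iterate_succ_apply']
    exact splits_deriv _ ih

theorem laguerre (p : ℝ[X]) (hp : p.Splits) :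
    2 * p.coeff 0 * p.coeff 2 ≤ p.coeff 1 ^ 2 := by
  unfold Polynomial.Splits at hp
  induction hp using Submonoid.closure_induction with
  | mem x hx =>
    rcases hx with ⟨a, rfl⟩ | ⟨a, rfl⟩
    · simp
    · simp [Polynomial.coeff_X, Polynomial.coeff_C]
  | one => simp [Polynomial.coeff_one]
  | mul f g _ _ h1 h2 =>
    have e0 : (f * g).coeff 0 = f.coeff 0 * g.coeff 0 := by simp [Polynomial.mul_coeff_zero]
    have e1 : (f * g).coeff 1 = f.coeff 0 * g.coeff 1 + f.coeff 1 * g.coeff 0 :=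
      Polynomial.mul_coeff_one f g
    have e2 : (f * g).coeff 2 =
        f.coeff 0 * g.coeff 2 + f.coeff 1 * g.coeff 1 + f.coeff 2 * g.coeff 0 := by
      rw [Polynomial.coeff_mul]
      simp [Finset.Nat.antidiagonal_succ]
      ring
    rw [e0, e1, e2]
    nlinarith [mul_nonneg (sq_nonneg (f.coeff 0)) (sub_nonneg.2 h2),
      mul_nonneg (sq_nonneg (g.coeff 0)) (sub_nonneg.2 h1)]

theorem EE_newton {ι : Type} [DecidableEq ι] (l : ι → ℝ) (s : Finset ι) (m : ℕ) :
    EE l s m * EE l s (m + 2) ≤ EE l s (m + 1) ^ 2 := by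
  by_cases hneg : EE l s m * EE l s (m + 2) ≤ 0
  · exact hneg.trans (sq_nonneg _)
  push Not at hneg
  have hs : (∏ i ∈ s, (1 + C (l i) * X) : ℝ[X]).Splits := by
    refine Polynomial.Splits.prod fun i _ => ?_
    apply Polynomial.Splits.of_natDegree_le_one
    compute_degree
  have h := laguerre _ (splits_deriv_iter _ hs m)
  simp only [Polynomial.coeff_iterate_derivative, zero_add, nsmul_eq_mul] at h
  rw [show 1 + m = m + 1 by ring, show 2 + m = m + 2 by ring] at h
  change 2 * (_ * EE l s m) * (_ * EE l s (m + 2)) ≤ (_ * EE l s (m + 1)) ^ 2 at h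
  have d0 : (m.descFactorial m : ℝ) = (m.factorial : ℝ) := by rw [Nat.descFactorial_self]
  have d1 : ((m + 1).descFactorial m : ℝ) = ((m : ℝ) + 1) * m.factorial := by
    have := Nat.factorial_mul_descFactorial (show m ≤ m + 1 by omega)
    simp [Nat.factorial_succ] at this
    exact_mod_cast this
  have d2 : 2 * ((m + 2).descFactorial m : ℝ) = ((m : ℝ) + 2) * ((m + 1) * m.factorial) := by
    have := Nat.factorial_mul_descFactorial (show m ≤ m + 2 by omega)
    simp [Nat.factorial_succ] at this
    exact_mod_cast this
  rw [d0, d1] at h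
  have hf : (0 : ℝ) < m.factorial := by exact_mod_cast m.factorial_pos
  have h' : (m.factorial : ℝ) ^ 2 * (m + 1) * ((m + 2) * (EE l s m * EE l s (m + 2))) ≤
      (m.factorial : ℝ) ^ 2 * (m + 1) * ((m + 1) * EE l s (m + 1) ^ 2) := by
    calc _ = 2 * ((m.factorial : ℝ) * EE l s m) * (((m + 2).descFactorial m : ℝ) * EE l s (m + 2)) := by
          linear_combination (-(m.factorial : ℝ) * EE l s m * EE l s (m + 2)) * d2
      _ ≤ _ := h
      _ = _ := by ring
  have h2 := le_of_mul_le_mul_left h' (by positivity)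
  have hm : (0 : ℝ) ≤ m := m.cast_nonneg
  nlinarith

/-- Gårding cone membership for a vector restricted to a finset. -/
def InG {ι : Type} (l : ι → ℝ) (s : Finset ι) (k : ℕ) : Prop :=
  ∀ j, j ≤ k → 0 < EE l s j

theorem InG.erase {ι : Type} [DecidableEq ι] {l : ι → ℝ} {s : Finset ι} {k : ℕ} (h : InG l s (k + 1))
    {i : ι} (hi : i ∈ s) : InG l (s.erase i) k := by
  intro j
  induction j with
  | zero => intro _; rw [EE_zero]; norm_num
  | succ m ih =>
    intro hm
    have h0 := ih (by omega)
    by_contra hc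
    push Not at hc
    have h1 := h (m + 1) (by omega)
    have h2 := h (m + 2) (by omega)
    rw [EE_erase l s i hi] at h1 h2
    have hN := EE_newton l (s.erase i) m
    set p := EE l (s.erase i) m
    set q := EE l (s.erase i) (m + 1)
    set r := EE l (s.erase i) (m + 2)
    nlinarith [mul_pos h0 h2, mul_nonneg (neg_nonneg.2 hc) h1.le]

theorem InG.erase' {ι : Type} [DecidableEq ι] {l : ι → ℝ} {s : Finset ι} {k j : ℕ} (h : InG l s k)
    {i : ι} (hi : i ∈ s) (hj : j + 1 ≤ k) : 0 < EE l (s.erase i) j := by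
  obtain ⟨k', rfl⟩ : ∃ k', k = k' + 1 := ⟨k - 1, by omega⟩
  exact h.erase hi j (by omega)

/-- Euler identity -/
theorem EE_euler {ι : Type} [DecidableEq ι] (l : ι → ℝ) (s : Finset ι) (k : ℕ) :
    ∑ i ∈ s, l i * EE l (s.erase i) k = ((k : ℝ) + 1) * EE l s (k + 1) := by
  have h := congrArg (fun p : ℝ[X] => p.coeff k)
    (Polynomial.derivative_prod_finset (s := s) (f := fun i => (1 + C (l i) * X : ℝ[X])))
  simp only [Polynomial.coeff_derivative, Polynomial.finsetSum_coeff] at h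
  unfold EE
  rw [mul_comm ((k : ℝ) + 1), h]
  refine Finset.sum_congr rfl fun i _ => ?_
  have hd : Polynomial.derivative (1 + C (l i) * X : ℝ[X]) = C (l i) := by simp
  rw [hd, mul_comm, Polynomial.coeff_mul_C]

theorem EE_swap {ι : Type} [DecidableEq ι] (l : ι → ℝ) (s : Finset ι) (k : ℕ) {i j : ι} (hi : i ∈ s)
    (hj : j ∈ s) (hij : i ≠ j) :
    EE l (s.erase i) (k + 1) - EE l (s.erase j) (k + 1) =
      (l j - l i) * EE l ((s.erase i).erase j) k := by
  rw [EE_erase l (s.erase i) j (Finset.mem_erase.2 ⟨hij.symm, hj⟩),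
    EE_erase l (s.erase j) i (Finset.mem_erase.2 ⟨hij, hi⟩), Finset.erase_right_comm (a := j)]
  ring

theorem EE_cheb {ι : Type} [DecidableEq ι] {l : ι → ℝ} {s : Finset ι} {m : ℕ} (h : InG l s (m + 1))
    (w : ι → ℝ) (hw : ∀ i ∈ s, 0 ≤ w i) (hw1 : ∑ i ∈ s, w i = 1)
    (hl : ∑ i ∈ s, w i * l i ≤ 0) :
    EE l s m ≤ ∑ i ∈ s, w i * EE l (s.erase i) m := by
  rcases m with _ | m
  · simp [EE_zero, hw1]
  have e1 : ∑ i ∈ s, w i * EE l (s.erase i) (m + 1) =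
      EE l s (m + 1) - ∑ i ∈ s, w i * (l i * EE l (s.erase i) m) := by
    rw [← one_mul (EE l s (m + 1)), ← hw1, Finset.sum_mul, ← Finset.sum_sub_distrib]
    refine Finset.sum_congr rfl fun i hi => ?_
    rw [EE_erase l s i hi]; ring
  rw [e1]
  have anti : ∀ i ∈ s, ∀ j ∈ s,
      (l i - l j) * (EE l (s.erase i) m - EE l (s.erase j) m) ≤ 0 := by
    intro i hi j hj
    by_cases hij : i = j
    · subst hij; simp
    rcases m with _ | m
    · simp [EE_zero]
    rw [EE_swap l s m hi hj hij]
    have : 0 < EE l ((s.erase i).erase j) m :=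
      (h.erase hi).erase' (Finset.mem_erase.2 ⟨Ne.symm hij, hj⟩) (by omega)
    nlinarith [mul_nonneg this.le (sq_nonneg (l i - l j))]
  have hd : ∑ i ∈ s, ∑ j ∈ s, w i * w j *
      ((l i - l j) * (EE l (s.erase i) m - EE l (s.erase j) m)) ≤ 0 :=
    Finset.sum_nonpos fun i hi => Finset.sum_nonpos fun j hj =>
      mul_nonpos_of_nonneg_of_nonpos (mul_nonneg (hw i hi) (hw j hj)) (anti i hi j hj)
  set σ : ι → ℝ := fun i => EE l (s.erase i) m with hσ
  have he : ∑ i ∈ s, ∑ j ∈ s, w i * w j * ((l i - l j) * (σ i - σ j)) =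
      2 * (∑ i ∈ s, w i * (l i * σ i)) - 2 * ((∑ i ∈ s, w i * l i) * (∑ i ∈ s, w i * σ i)) := by
    have a1 : ∑ i ∈ s, ∑ j ∈ s, (w i * (l i * σ i)) * w j = ∑ i ∈ s, w i * (l i * σ i) := by
      rw [← Finset.sum_mul_sum, hw1, mul_one]
    have a2 : ∑ i ∈ s, ∑ j ∈ s, w i * (w j * (l j * σ j)) = ∑ i ∈ s, w i * (l i * σ i) := by
      rw [← Finset.sum_mul_sum, hw1, one_mul]
    have a3 := Finset.sum_mul_sum s s (fun i => w i * l i) (fun i => w i * σ i)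
    have a4 := Finset.sum_mul_sum s s (fun i => w i * σ i) (fun i => w i * l i)
    have : ∀ i j, w i * w j * ((l i - l j) * (σ i - σ j)) =
      (w i * (l i * σ i)) * w j + w i * (w j * (l j * σ j)) -
        (w i * l i) * (w j * σ j) - (w i * σ i) * (w j * l j) := by intros; ring
    simp only [this, Finset.sum_sub_distrib, Finset.sum_add_distrib]
    rw [a1, a2, ← a3, ← a4]; ring
  have hσ0 : 0 ≤ ∑ i ∈ s, w i * σ i :=
    Finset.sum_nonneg fun i hi => mul_nonneg (hw i hi) (h.erase' hi (by omega)).le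
  have : (∑ i ∈ s, w i * l i) * (∑ i ∈ s, w i * σ i) ≤ 0 :=
    mul_nonpos_of_nonpos_of_nonneg hl hσ0
  have hd' := he ▸ hd
  change EE l s (m + 1) ≤ EE l s (m + 1) - ∑ i ∈ s, w i * (l i * σ i)
  linarith

/-- coefficient weights in the shift expansion -/
noncomputable def shw (N : ℕ) (t : ℝ) (m k : ℕ) : ℝ :=
  if m ≤ k then t ^ (k - m) * ((N - m).choose (k - m) : ℝ) else 0

theorem EE_shift {ι : Type} [DecidableEq ι] (c : ι → ℝ) (s : Finset ι) (t : ℝ) (k : ℕ) :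
    EE (fun i => c i + t) s k =
      ∑ τ ∈ s.powerset, (∏ i ∈ τ, c i) * shw s.card t τ.card k := by
  have hp : (∏ i ∈ s, (1 + C (c i + t) * X) : ℝ[X]) =
      ∏ i ∈ s, (C (c i) * X + (1 + C t * X)) := by
    refine Finset.prod_congr rfl fun i _ => ?_
    rw [C_add]; ring
  unfold EE
  rw [hp, Finset.prod_add, Polynomial.finsetSum_coeff]
  refine Finset.sum_congr rfl fun τ hτ => ?_
  have hpow : ((1 + C t * X : ℝ[X]) ^ (s.card - τ.card)) =
      ((1 + X : ℝ[X]) ^ (s.card - τ.card)).comp (C t * X) := by simp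
  rw [Finset.prod_mul_distrib, Finset.prod_const, Finset.prod_const,
    Finset.card_sdiff_of_subset (Finset.mem_powerset.1 hτ), hpow,
    mul_assoc, ← map_prod, Polynomial.coeff_C_mul, Polynomial.coeff_X_pow_mul']
  unfold shw
  split_ifs with h
  · rw [Polynomial.comp_C_mul_X_coeff, Polynomial.coeff_one_add_X_pow]; ring
  · rfl

theorem shw_zero (N m k : ℕ) : shw N 0 m k = if m = k then 1 else 0 := by
  unfold shw
  rcases lt_trichotomy m k with h | h | h
  · rw [if_pos h.le, if_neg h.ne, zero_pow (by omega), zero_mul]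
  · subst h; simp
  · rw [if_neg (by omega), if_neg h.ne']

theorem EE_exp {ι : Type} [DecidableEq ι] (c : ι → ℝ) (s : Finset ι) (k : ℕ) :
    EE c s k = ∑ τ ∈ s.powerset, (∏ i ∈ τ, c i) * (if τ.card = k then 1 else 0) := by
  have := EE_shift c s 0 k
  simpa [shw_zero] using this

theorem EE_pos {ι : Type} [DecidableEq ι] (c : ι → ℝ) (s : Finset ι) (hc : ∀ i ∈ s, 0 < c i) (k : ℕ)
    (hk : k ≤ s.card) : 0 < EE c s k := by
  rw [EE_exp]
  obtain ⟨τ, hτ, hcard⟩ := Finset.exists_subset_card_eq hk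
  refine Finset.sum_pos' (fun τ' h' => ?_) ⟨τ, Finset.mem_powerset.2 hτ, ?_⟩
  · have := Finset.prod_nonneg (s := τ') (f := c)
      fun i hi => (hc i (Finset.mem_powerset.1 h' hi)).le
    split_ifs <;> simp [this]
  · rw [if_pos hcard, mul_one]
    exact Finset.prod_pos fun i hi => hc i (hτ hi)

theorem EE_nonneg {ι : Type} [DecidableEq ι] (c : ι → ℝ) (s : Finset ι) (hc : ∀ i ∈ s, 0 < c i) (k : ℕ) :
    0 ≤ EE c s k := by
  rw [EE_exp]
  refine Finset.sum_nonneg (fun τ' h' => ?_)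
  have := Finset.prod_nonneg (s := τ') (f := c)
      fun i hi => (hc i (Finset.mem_powerset.1 h' hi)).le
  split_ifs <;> simp [this]

theorem EE_mono_shift {ι : Type} [DecidableEq ι] (c : ι → ℝ) (s : Finset ι) (hc : ∀ i ∈ s, 0 < c i)
    (t : ℝ) (ht : 0 ≤ t) (k : ℕ) : EE c s k ≤ EE (fun i => c i + t) s k := by
  rw [EE_exp, EE_shift]
  refine Finset.sum_le_sum fun τ hτ => ?_
  refine mul_le_mul_of_nonneg_left ?_ (Finset.prod_nonneg
      fun i hi => (hc i (Finset.mem_powerset.1 hτ hi)).le)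
  unfold shw
  split_ifs with h1 h2 h2
  · subst h1; simp
  · omega
  · positivity
  · rfl

/-- the key termwise inequality -/
theorem EE_claim {ι : Type} [DecidableEq ι] (c : ι → ℝ) (s : Finset ι) (hc : ∀ i ∈ s, 0 < c i)
    (t : ℝ) (ht : 0 ≤ t) (m : ℕ) (hN : 2 ≤ s.card) (hm : 2 * m + 1 ≤ s.card) :
    t * EE (fun i => c i + t) s m + t * EE c s m ≤
      EE (fun i => c i + t) s (m + 1) - EE c s (m + 1) := by
  rw [EE_exp c, EE_exp c, EE_shift, EE_shift, Finset.mul_sum, Finset.mul_sum,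
    ← Finset.sum_add_distrib, ← Finset.sum_sub_distrib]
  refine Finset.sum_le_sum fun τ hτ => ?_
  have h0 : 0 ≤ ∏ i ∈ τ, c i := Finset.prod_nonneg
      fun i hi => (hc i (Finset.mem_powerset.1 hτ hi)).le
  have key : t * shw s.card t τ.card m + t * (if τ.card = m then 1 else 0) ≤
      shw s.card t τ.card (m + 1) - (if τ.card = m + 1 then 1 else 0) := by
    set N := s.card
    set r := τ.card
    unfold shw
    rcases lt_trichotomy r m with h | h | h
    · rw [if_pos h.le, if_neg h.ne, if_pos (by omega), if_neg (by omega)]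
      have e : m + 1 - r = (m - r) + 1 := by omega
      rw [e, pow_succ]
      have hch : (N - r).choose (m - r) ≤ (N - r).choose (m - r + 1) := by
        have := Nat.choose_succ_right_eq (N - r) (m - r)
        have h2 : m - r + 1 ≤ N - r - (m - r) := by omega
        have h3 := Nat.mul_le_mul_left ((N - r).choose (m - r)) h2
        rw [← this] at h3
        exact Nat.le_of_mul_le_mul_right h3 (by omega)
      have hch' : (((N - r).choose (m - r) : ℕ) : ℝ) ≤ ((N - r).choose (m - r + 1) : ℕ) := by
        exact_mod_cast hch
      have := mul_le_mul_of_nonneg_left hch' (by positivity : 0 ≤ t ^ (m - r) * t)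
      nlinarith
    · rw [if_pos h.le, if_pos h, if_pos (by omega), if_neg (by omega)]
      subst h
      simp only [Nat.sub_self, pow_zero, Nat.choose_zero_right, Nat.add_sub_cancel_left, pow_one,
        Nat.choose_one_right]
      have : (2 : ℝ) ≤ ((N - r : ℕ) : ℝ) := by
        have : 2 ≤ N - r := by omega
        exact_mod_cast this
      push_cast
      nlinarith
    · rw [if_neg (by omega), if_neg (by omega)]
      by_cases h' : r = m + 1
      · simp [h']
      · rw [if_neg (by omega), if_neg h']; simp
  nlinarith [mul_le_mul_of_nonneg_left key h0]

/-- strict subsolution inequality for a single coordinate -/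
theorem EE_barrier {ι : Type} [DecidableEq ι] (a : ι → ℝ) (s : Finset ι) (ha : ∀ i ∈ s, 0 < a i) (i : ι)
    (hi : i ∈ s) (t δ : ℝ) (ht : 0 < t) (hδ : δ < 1) (htδ : t * δ ≤ a i) (m : ℕ)
    (hN : 3 ≤ s.card) (hm : 2 * (m + 1) ≤ s.card) :
    EE a s (m + 1) + t * (2 + δ) * EE (fun i => a i + t) (s.erase i) m <
      EE (fun i => a i + t) s (m + 1) := by
  have hcard : (s.erase i).card = s.card - 1 := Finset.card_erase_of_mem hi
  have hc : ∀ j ∈ s.erase i, 0 < a j := fun j hj => ha j (Finset.mem_of_mem_erase hj)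
  have h1 := EE_claim a (s.erase i) hc t ht.le m (by omega) (by omega)
  have h2 := EE_mono_shift a (s.erase i) hc t ht.le m
  have h3 := EE_pos a (s.erase i) hc m (by omega)
  rw [EE_erase a s i hi, EE_erase (fun i => a i + t) s i hi]
  set p := EE (fun i => a i + t) (s.erase i) m
  set p0 := EE a (s.erase i) m
  nlinarith [mul_le_mul_of_nonneg_right htδ (sub_nonneg.2 h2), mul_pos (mul_pos ht h3) (sub_pos.2 hδ)]

end VecAlg

section MatAlg
open Polynomial

theorem matSk_rev (n k : ℕ) (hk : k ≤ n) (M : Matrix (Fin n) (Fin n) ℝ) :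
    matSk n k M = (-1) ^ k * M.charpolyRev.coeff k := by
  unfold matSk
  rw [← Matrix.reverse_charpoly, Polynomial.coeff_reverse, Matrix.charpoly_natDegree_eq_dim,
    Fintype.card_fin, Polynomial.revAt_le hk]

theorem det_diag_rank_field {K : Type} [Field K] {n : ℕ} (d u v : Fin n → K)
    (hd : ∀ i, d i ≠ 0) :
    (Matrix.diagonal d + Matrix.vecMulVec u v).det =
      ∏ i, d i + ∑ i, u i * v i * ∏ j ∈ Finset.univ.erase i, d j := by
  have hdet : IsUnit (Matrix.diagonal d).det := by
    rw [Matrix.det_diagonal, isUnit_iff_ne_zero]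
    exact Finset.prod_ne_zero_iff.2 fun i _ => hd i
  have h := Matrix.det_add_replicateCol_mul_replicateRow (ι := Unit) hdet u v
  have e : Matrix.replicateCol Unit u * Matrix.replicateRow Unit v = Matrix.vecMulVec u v := by
    rw [Matrix.vecMulVec_eq Unit]
  rw [← e, h, Matrix.det_diagonal, Matrix.det_unique]
  have hinv : (Matrix.diagonal d)⁻¹ = Matrix.diagonal (fun i => (d i)⁻¹) := by
    apply Matrix.inv_eq_right_inv
    rw [Matrix.diagonal_mul_diagonal, ← Matrix.diagonal_one]
    congr 1; ext i; simp [hd i]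
  rw [hinv]
  simp only [Matrix.add_apply, Matrix.one_apply_eq, Matrix.mul_apply, Matrix.replicateRow_apply,
    Matrix.replicateCol_apply, Matrix.diagonal_apply]
  rw [mul_add, mul_one, Finset.mul_sum]
  congr 1
  refine Finset.sum_congr rfl fun i _ => ?_
  rw [← Finset.mul_prod_erase Finset.univ d (Finset.mem_univ i)]
  simp
  field_simp [hd i]

theorem det_diag_rank {n : ℕ} (d u v : Fin n → ℝ[X]) (hd : ∀ i, d i ≠ 0) :
    (Matrix.diagonal d + Matrix.vecMulVec u v).det =
      ∏ i, d i + ∑ i, u i * v i * ∏ j ∈ Finset.univ.erase i, d j := by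
  let φ := algebraMap ℝ[X] (FractionRing ℝ[X])
  have hφ : Function.Injective φ := IsFractionRing.injective _ _
  apply hφ
  have h := det_diag_rank_field (fun i => φ (d i)) (fun i => φ (u i)) (fun i => φ (v i))
    (fun i => by simpa [φ] using hd i)
  rw [RingHom.map_det]
  simp only [map_add, map_prod, map_sum, map_mul]
  rw [← h]
  congr 1
  ext i j
  simp [Matrix.diagonal_apply, Matrix.vecMulVec_apply]

theorem matSk_diag_rank (n k : ℕ) (hk : k + 1 ≤ n) (l w : Fin n → ℝ) (s : ℝ) :
    matSk n (k + 1) (Matrix.diagonal l + s • Matrix.vecMulVec w w) =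
      EE l Finset.univ (k + 1) +
        s * ∑ i, w i ^ 2 * EE l (Finset.univ.erase i) k := by
  rw [matSk_rev n (k + 1) hk]
  have h1 : (Matrix.diagonal l + s • Matrix.vecMulVec w w).charpolyRev =
      (Matrix.diagonal (fun i => (1 - C (l i) * X : ℝ[X])) +
        Matrix.vecMulVec (fun i => -(C s * X * C (w i))) (fun i => C (w i))).det := by
    unfold Matrix.charpolyRev
    congr 1
    ext1 i j
    by_cases hij : i = j
    · subst hij; simp [Matrix.vecMulVec_apply]; ring
    · simp [Matrix.vecMulVec_apply, hij]; ring
  have hne : ∀ i, (1 - C (l i) * X : ℝ[X]) ≠ 0 := by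
    intro i h
    have := congrArg (Polynomial.eval 0) h
    simp at this
  have hc : ∀ (t : Finset (Fin n)) (m : ℕ), (∏ i ∈ t, (1 - C (l i) * X : ℝ[X])).coeff m =
      (-1) ^ m * EE l t m := by
    intro t m
    have : (∏ i ∈ t, (1 - C (l i) * X : ℝ[X])) =
        (∏ i ∈ t, (1 + C (l i) * X : ℝ[X])).comp (C (-1) * X) := by
      rw [Polynomial.prod_comp]
      refine Finset.prod_congr rfl fun i _ => ?_
      simp [sub_eq_add_neg]
    rw [this, Polynomial.comp_C_mul_X_coeff]; unfold EE; ring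
  rw [h1, det_diag_rank _ _ _ hne, Polynomial.coeff_add, hc, Polynomial.finsetSum_coeff]
  have h2 : ∀ i, (-(C s * X * C (w i)) * C (w i) *
      ∏ j ∈ Finset.univ.erase i, (1 - C (l j) * X : ℝ[X])).coeff (k + 1) =
      -(s * w i ^ 2 * ((-1) ^ k * EE l (Finset.univ.erase i) k)) := by
    intro i
    have : -(C s * X * C (w i)) * C (w i) *
      ∏ j ∈ Finset.univ.erase i, (1 - C (l j) * X : ℝ[X]) =
      C (-(s * w i ^ 2)) * (X * ∏ j ∈ Finset.univ.erase i, (1 - C (l j) * X : ℝ[X])) := by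
      simp only [C_neg, C_mul, C_pow]; ring
    rw [this, Polynomial.coeff_C_mul, Polynomial.coeff_X_mul, hc]; ring
  simp only [h2]
  rw [mul_add, ← mul_assoc, ← pow_add, Finset.mul_sum, Finset.mul_sum]
  congr 1
  · rw [Even.neg_one_pow ⟨k + 1, rfl⟩, one_mul]
  · refine Finset.sum_congr rfl fun i _ => ?_
    have : ((-1 : ℝ)) ^ (k + 1) * (-1) ^ k = -1 := by
      rw [← pow_add]; exact Odd.neg_one_pow ⟨k, by ring⟩
    linear_combination (-(s * w i ^ 2 * EE l (Finset.univ.erase i) k)) * this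

theorem matSk_zero (n : ℕ) (M : Matrix (Fin n) (Fin n) ℝ) : matSk n 0 M = 1 := by
  rw [matSk_rev n 0 (Nat.zero_le _), Polynomial.coeff_zero_eq_eval_zero]
  simp

theorem matSk_diag (n k : ℕ) (hk : k ≤ n) (l : Fin n → ℝ) :
    matSk n k (Matrix.diagonal l) = EE l Finset.univ k := by
  rcases k with _ | k
  · rw [matSk_zero, EE_zero]
  · have := matSk_diag_rank n k hk l 0 0
    simpa using this

theorem matSk_conj (n k : ℕ) (U M : Matrix (Fin n) (Fin n) ℝ) (hU : U.transpose * U = 1) :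
    matSk n k (U * M * U.transpose) = matSk n k M := by
  unfold matSk
  rw [Matrix.charpoly_mul_comm, ← mul_assoc, hU, one_mul]

theorem sym_decomp {n : ℕ} (X : Matrix (Fin n) (Fin n) ℝ) (hX : X.IsSymm) :
    ∃ (l : Fin n → ℝ) (U : Matrix (Fin n) (Fin n) ℝ), U.transpose * U = 1 ∧
      U * U.transpose = 1 ∧ X = U * Matrix.diagonal l * U.transpose := by
  have hH : X.IsHermitian := by
    rw [Matrix.IsHermitian, Matrix.conjTranspose_eq_transpose_of_trivial]; exact hX
  refine ⟨hH.eigenvalues, (hH.eigenvectorUnitary : Matrix (Fin n) (Fin n) ℝ), ?_, ?_, ?_⟩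
  · have := Unitary.coe_star_mul_self hH.eigenvectorUnitary
    rwa [Matrix.star_eq_conjTranspose, Matrix.conjTranspose_eq_transpose_of_trivial] at this
  · have := Unitary.coe_mul_star_self hH.eigenvectorUnitary
    rwa [Unitary.coe_star, Matrix.star_eq_conjTranspose,
      Matrix.conjTranspose_eq_transpose_of_trivial] at this
  · have := hH.spectral_theorem
    rw [Unitary.conjStarAlgAut_apply, Matrix.star_eq_conjTranspose,
      Matrix.conjTranspose_eq_transpose_of_trivial] at this
    exact this

theorem conj_rank {n : ℕ} (U : Matrix (Fin n) (Fin n) ℝ) (hU : U * U.transpose = 1)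
    (l v : Fin n → ℝ) (s : ℝ) :
    U * Matrix.diagonal l * U.transpose + s • Matrix.vecMulVec v v =
      U * (Matrix.diagonal l + s • Matrix.vecMulVec (U.transpose.mulVec v) (U.transpose.mulVec v))
        * U.transpose := by
  have h : U * Matrix.vecMulVec (U.transpose.mulVec v) (U.transpose.mulVec v) * U.transpose =
      Matrix.vecMulVec v v := by
    rw [Matrix.mul_vecMulVec, Matrix.vecMulVec_mul, Matrix.mulVec_mulVec, hU, Matrix.one_mulVec,
      Matrix.vecMul_transpose, Matrix.mulVec_mulVec, hU, Matrix.one_mulVec]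
  rw [mul_add, add_mul, Matrix.mul_smul, Matrix.smul_mul, h]

theorem matSk_rank {n : ℕ} (U : Matrix (Fin n) (Fin n) ℝ) (hU' : U.transpose * U = 1)
    (hU : U * U.transpose = 1)
    (l v : Fin n → ℝ) (s : ℝ) (k : ℕ) (hk : k + 1 ≤ n) :
    matSk n (k + 1) (U * Matrix.diagonal l * U.transpose + s • Matrix.vecMulVec v v) =
      EE l Finset.univ (k + 1) +
        s * ∑ i, (U.transpose.mulVec v) i ^ 2 * EE l (Finset.univ.erase i) k := by
  rw [conj_rank U hU, matSk_conj n _ _ _ hU', matSk_diag_rank n k hk]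

/-- Gårding cone for matrices. -/
def MG (n k : ℕ) (X : Matrix (Fin n) (Fin n) ℝ) : Prop :=
  ∀ j : ℕ, 1 ≤ j → j ≤ k → 0 < matSk n j X

theorem MG_inG {n k : ℕ} (hk : k ≤ n) (U : Matrix (Fin n) (Fin n) ℝ) (hU' : U.transpose * U = 1)
    (l : Fin n → ℝ) (h : MG n k (U * Matrix.diagonal l * U.transpose)) :
    InG l Finset.univ k := by
  intro j hj
  rcases j with _ | j
  · rw [EE_zero]; norm_num
  · have := h (j + 1) (by omega) hj
    rwa [matSk_conj n _ _ _ hU', matSk_diag n _ (by omega)] at this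

theorem vmv_symm {n : ℕ} (v : Fin n → ℝ) : (Matrix.vecMulVec v v).IsSymm := by
  ext i j; simp [Matrix.vecMulVec_apply, mul_comm]

theorem matSk_mono_rank {n k : ℕ} (hk : k ≤ n) (X : Matrix (Fin n) (Fin n) ℝ) (hX : X.IsSymm)
    (h : MG n k X) (v : Fin n → ℝ) (s : ℝ) (hs : 0 ≤ s) (j : ℕ) (hj : 1 ≤ j) (hjk : j ≤ k) :
    matSk n j X ≤ matSk n j (X + s • Matrix.vecMulVec v v) := by
  obtain ⟨l, U, h1, h2, rfl⟩ := sym_decomp X hX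
  obtain ⟨j, rfl⟩ : ∃ i, j = i + 1 := ⟨j - 1, by omega⟩
  rw [matSk_rank U h1 h2 l v s j (by omega), matSk_conj n _ _ _ h1, matSk_diag n _ (by omega)]
  have hG := MG_inG hk U h1 l h
  have : 0 ≤ s * ∑ i, (U.transpose.mulVec v) i ^ 2 * EE l (Finset.univ.erase i) j :=
    mul_nonneg hs (Finset.sum_nonneg fun i _ => mul_nonneg (sq_nonneg _)
      (hG.erase' (Finset.mem_univ i) (by omega)).le)
  linarith

theorem conj_diag_sum {n : ℕ} (U : Matrix (Fin n) (Fin n) ℝ) (l : Fin n → ℝ) :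
    U * Matrix.diagonal l * U.transpose =
      ∑ i, l i • Matrix.vecMulVec (fun r => U r i) (fun r => U r i) := by
  ext p q
  rw [Matrix.mul_apply, Matrix.sum_apply]
  refine Finset.sum_congr rfl fun i _ => ?_
  rw [Matrix.mul_diagonal]
  simp [Matrix.vecMulVec_apply]; ring

theorem matSk_mono {n k : ℕ} (hk : k ≤ n) (X P : Matrix (Fin n) (Fin n) ℝ) (hX : X.IsSymm)
    (h : MG n k X) (hPs : P.IsSymm) (hP : ∀ v : Fin n → ℝ, 0 ≤ v ⬝ᵥ P.mulVec v)
    (j : ℕ) (hj : 1 ≤ j) (hjk : j ≤ k) :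
    matSk n j X ≤ matSk n j (X + P) := by
  obtain ⟨l, U, h1, h2, rfl⟩ := sym_decomp P hPs
  have hl : ∀ i, 0 ≤ l i := by
    intro i
    have := hP (U.mulVec (Pi.single i 1))
    rw [Matrix.mulVec_mulVec, mul_assoc, h1, mul_one, ← Matrix.mulVec_mulVec,
      Matrix.dotProduct_mulVec, ← Matrix.mulVec_transpose, Matrix.mulVec_mulVec, h1,
      Matrix.one_mulVec] at this
    simpa using this
  rw [conj_diag_sum]
  have key : ∀ t : Finset (Fin n),
      (X + ∑ i ∈ t, l i • Matrix.vecMulVec (fun r => U r i) (fun r => U r i)).IsSymm ∧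
      ∀ j : ℕ, 1 ≤ j → j ≤ k → matSk n j X ≤ matSk n j
        (X + ∑ i ∈ t, l i • Matrix.vecMulVec (fun r => U r i) (fun r => U r i)) := by
    intro t
    induction t using Finset.induction_on with
    | empty => simpa using hX
    | insert a t ha ih =>
      rw [Finset.sum_insert ha, add_comm (l a • _), ← add_assoc]
      refine ⟨ih.1.add ((vmv_symm _).smul _), fun j hj hjk => (ih.2 j hj hjk).trans ?_⟩
      exact matSk_mono_rank hk _ ih.1 (fun i hi hik => (h i hi hik).trans_le (ih.2 i hi hik))
        _ _ (hl a) j hj hjk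
  exact (key Finset.univ).2 j hj hjk

theorem matSk_smul {n k : ℕ} (hk : k ≤ n) (X : Matrix (Fin n) (Fin n) ℝ) (hX : X.IsSymm) (c : ℝ) :
    matSk n k (c • X) = c ^ k * matSk n k X := by
  obtain ⟨l, U, h1, h2, rfl⟩ := sym_decomp X hX
  have : c • (U * Matrix.diagonal l * U.transpose) =
      U * Matrix.diagonal (fun i => c * l i) * U.transpose := by
    rw [show Matrix.diagonal (fun i => c * l i) = c • Matrix.diagonal l by
      ext i j; simp [Matrix.diagonal_apply], Matrix.mul_smul, Matrix.smul_mul]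
  rw [this, matSk_conj n _ _ _ h1, matSk_conj n _ _ _ h1, matSk_diag n _ hk, matSk_diag n _ hk]
  unfold EE
  have : (∏ i, (1 + C (c * l i) * X : ℝ[X])) =
        (∏ i, (1 + C (l i) * X : ℝ[X])).comp (C c * X) := by
    rw [Polynomial.prod_comp]
    refine Finset.prod_congr rfl fun i _ => ?_
    simp; ring
  rw [this, Polynomial.comp_C_mul_X_coeff]; ring

/-- differentiability of `matSk` along curves -/
theorem matSk_deriv (n k : ℕ) (X : Matrix (Fin n) (Fin n) ℝ) :
    ∃ T : Matrix (Fin n) (Fin n) ℝ →ₗ[ℝ] ℝ,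
      ∀ (M : ℝ → Matrix (Fin n) (Fin n) ℝ) (M' : Matrix (Fin n) (Fin n) ℝ), M 0 = X →
        (∀ i j, HasDerivAt (fun t => M t i j) (M' i j) 0) →
        HasDerivAt (fun t => matSk n k (M t)) (T M') 0 := by
  let p := (Matrix.charpoly.univ ℝ (Fin n)).coeff (n - k)
  have hp : ∀ M : Matrix (Fin n) (Fin n) ℝ, matSk n k M =
      (-1 : ℝ) ^ k * MvPolynomial.eval (fun ij : Fin n × Fin n => M ij.1 ij.2) p := by
    intro M
    unfold matSk
    have := Matrix.charpoly.univ_coeff_eval₂Hom (Fin n) (RingHom.id ℝ)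
      (fun ij : Fin n × Fin n => M ij.1 ij.2) (n - k)
    congr 1
    exact this.symm
  have hd : DifferentiableAt ℝ (fun f : Fin n × Fin n → ℝ => MvPolynomial.eval f p)
      (fun ij => X ij.1 ij.2) :=
    (AnalyticOnNhd.eval_mvPolynomial p _ (Set.mem_univ _)).differentiableAt
  let D := fderiv ℝ (fun f : Fin n × Fin n → ℝ => MvPolynomial.eval f p) (fun ij => X ij.1 ij.2)
  refine ⟨{ toFun := fun M => (-1 : ℝ) ^ k * D (fun ij => M ij.1 ij.2)
            map_add' := fun M N => ?_
            map_smul' := fun c M => ?_ }, fun M M' h0 hM => ?_⟩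
  · rw [← mul_add, ← map_add]; rfl
  · simp only [RingHom.id_apply, smul_eq_mul]
    rw [mul_left_comm, ← smul_eq_mul (a := c), ← map_smul]; rfl
  · simp only [hp]
    refine HasDerivAt.const_mul _ ?_
    have hc : HasDerivAt (fun t => (fun ij : Fin n × Fin n => M t ij.1 ij.2))
        (fun ij => M' ij.1 ij.2) 0 := hasDerivAt_pi.2 fun ij => hM ij.1 ij.2
    subst h0
    exact hd.hasFDerivAt.comp_hasDerivAt 0 hc

theorem psd_diag_nonneg {n : ℕ} (U : Matrix (Fin n) (Fin n) ℝ) (h1 : U.transpose * U = 1)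
    (l : Fin n → ℝ)
    (hP : ∀ v : Fin n → ℝ, 0 ≤ v ⬝ᵥ (U * Matrix.diagonal l * U.transpose).mulVec v) (i : Fin n) :
    0 ≤ l i := by
  have := hP (U.mulVec (Pi.single i 1))
  rw [Matrix.mulVec_mulVec, mul_assoc, h1, mul_one, ← Matrix.mulVec_mulVec,
    Matrix.dotProduct_mulVec, ← Matrix.mulVec_transpose, Matrix.mulVec_mulVec, h1,
    Matrix.one_mulVec] at this
  simpa using this

theorem quad_conj {n : ℕ} (U : Matrix (Fin n) (Fin n) ℝ) (l v : Fin n → ℝ) :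
    v ⬝ᵥ (U * Matrix.diagonal l * U.transpose).mulVec v =
      ∑ i, (U.transpose.mulVec v) i ^ 2 * l i := by
  rw [← Matrix.mulVec_mulVec, ← Matrix.mulVec_mulVec, Matrix.dotProduct_mulVec,
    ← Matrix.mulVec_transpose]
  simp only [dotProduct, Matrix.mulVec_diagonal]
  exact Finset.sum_congr rfl fun i _ => by ring

theorem grad_core {n m : ℕ} (hk : m + 1 ≤ n) (X Y : Matrix (Fin n) (Fin n) ℝ)
    (hX : X.IsSymm) (hG : MG n (m + 1) X) (hX1 : matSk n (m + 1) X = 1) (hY : Y.IsSymm)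
    (e : Fin n → ℝ) (he : e ⬝ᵥ e = 1) (heX : e ⬝ᵥ X.mulVec e ≤ 0) (θ α β : ℝ) (hθ : θ ≤ 0)
    (hβ : 0 ≤ β) (hαβ : n * β < α)
    (hq : ∀ v : Fin n → ℝ, v ⬝ᵥ Y.mulVec v ≤
      θ * (v ⬝ᵥ X.mulVec v) - α * (e ⬝ᵥ v) ^ 2 + β * (v ⬝ᵥ v))
    (M : ℝ → Matrix (Fin n) (Fin n) ℝ) (hM0 : M 0 = X)
    (hM : ∀ i j, HasDerivAt (fun t => M t i j) (Y i j) 0)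
    (hM1 : ∀ᶠ t in 𝓝 (0 : ℝ), matSk n (m + 1) (M t) = 1) : False := by
  obtain ⟨T, hT⟩ := matSk_deriv n (m + 1) X
  have hTline : ∀ Z : Matrix (Fin n) (Fin n) ℝ,
      HasDerivAt (fun t : ℝ => matSk n (m + 1) (X + t • Z)) (T Z) 0 := by
    intro Z
    refine hT _ Z (by simp) fun i j => ?_
    simp only [Matrix.add_apply, Matrix.smul_apply, smul_eq_mul]
    simpa using ((hasDerivAt_id (0 : ℝ)).mul_const (Z i j)).const_add (X i j)
  have hTY : T Y = 0 := by
    have h1 := hT M Y hM0 hM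
    have h2 : HasDerivAt (fun t => matSk n (m + 1) (M t)) 0 0 :=
      (hasDerivAt_const (0 : ℝ) (1 : ℝ)).congr_of_eventuallyEq hM1
    exact h1.unique h2
  have hTX : T X = m + 1 := by
    have h1 := hTline X
    have h2 : ∀ t : ℝ, matSk n (m + 1) (X + t • X) = (1 + t) ^ (m + 1) := by
      intro t
      rw [show X + t • X = (1 + t) • X by rw [add_smul, one_smul], matSk_smul hk X hX, hX1,
        mul_one]
    simp only [h2] at h1
    have h3 : HasDerivAt (fun t : ℝ => (1 + t) ^ (m + 1)) (m + 1) 0 := by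
      have := ((hasDerivAt_id (0 : ℝ)).const_add 1).fun_pow (m + 1)
      simpa using this
    exact h1.unique h3
  obtain ⟨l, U, h1, h2, hXd⟩ := sym_decomp X hX
  have hIn : InG l Finset.univ (m + 1) := MG_inG hk U h1 l (hXd ▸ hG)
  have hTv : ∀ v : Fin n → ℝ, T (Matrix.vecMulVec v v) =
      ∑ i, (U.transpose.mulVec v) i ^ 2 * EE l (Finset.univ.erase i) m := by
    intro v
    have h3 := hTline (Matrix.vecMulVec v v)
    rw [hXd] at h3
    simp only [matSk_rank U h1 h2 l v _ m hk] at h3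
    refine h3.unique ?_
    simpa using ((hasDerivAt_id (0 : ℝ)).mul_const
      (∑ i, (U.transpose.mulVec v) i ^ 2 * EE l (Finset.univ.erase i) m)).const_add
        (EE l Finset.univ (m + 1))
  have hTv0 : ∀ v : Fin n → ℝ, 0 ≤ T (Matrix.vecMulVec v v) := by
    intro v
    rw [hTv]
    exact Finset.sum_nonneg fun i _ => mul_nonneg (sq_nonneg _)
      (hIn.erase' (Finset.mem_univ i) le_rfl).le
  have hTP : ∀ P : Matrix (Fin n) (Fin n) ℝ, P.IsSymm →
      (∀ v : Fin n → ℝ, 0 ≤ v ⬝ᵥ P.mulVec v) → 0 ≤ T P := by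
    intro P hP hP0
    obtain ⟨p, V, g1, g2, rfl⟩ := sym_decomp P hP
    rw [conj_diag_sum, map_sum]
    refine Finset.sum_nonneg fun i _ => ?_
    rw [map_smul]
    exact mul_nonneg (psd_diag_nonneg V g1 p hP0 i) (hTv0 _)
  have hS : 0 < EE l Finset.univ m := hIn m (by omega)
  have hTI : T 1 ≤ n * EE l Finset.univ m := by
    have e1 : (1 : Matrix (Fin n) (Fin n) ℝ) = U * Matrix.diagonal (fun _ => 1) * U.transpose := by
      rw [Matrix.diagonal_one, mul_one, h2]
    have e2 : T 1 = ∑ i, EE l (Finset.univ.erase i) m := by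
      rw [e1, conj_diag_sum, map_sum]
      refine Finset.sum_congr rfl fun i _ => ?_
      have : U.transpose.mulVec (fun r => U r i) = Pi.single i 1 := by
        ext j
        have := congrFun (congrFun h1 j) i
        rw [Matrix.mul_apply] at this
        rw [Matrix.mulVec, dotProduct, this, Matrix.one_apply, Pi.single_apply]
      rw [one_smul, hTv, this]
      rw [Finset.sum_eq_single i]
      · simp
      · intro b _ hb; simp [hb]
      · simp
    rw [e2]
    rcases m with _ | m
    · simp [EE_zero]
    · have e3 := EE_euler l Finset.univ m
      have e4 : ∑ i, EE l (Finset.univ.erase i) (m + 1) =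
          ∑ i : Fin n, (EE l Finset.univ (m + 1) - l i * EE l (Finset.univ.erase i) m) :=
        Finset.sum_congr rfl fun i hi => by rw [EE_erase l Finset.univ i hi]; ring
      rw [e4, Finset.sum_sub_distrib, e3]
      simp only [Finset.sum_const, Finset.card_univ, Fintype.card_fin, nsmul_eq_mul]
      have : 0 ≤ ((m : ℝ) + 1) * EE l Finset.univ (m + 1) := by positivity
      linarith
  have hTe : EE l Finset.univ m ≤ T (Matrix.vecMulVec e e) := by
    rw [hTv]
    refine EE_cheb hIn _ (fun i _ => sq_nonneg _) ?_ ?_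
    · have := quad_conj U (fun _ => 1) e
      rw [Matrix.diagonal_one, mul_one, h2, Matrix.one_mulVec, he] at this
      simpa using this.symm
    · rw [hXd, quad_conj] at heX
      exact heX
  have hfin := hTP (θ • X - α • Matrix.vecMulVec e e + β • (1 : Matrix (Fin n) (Fin n) ℝ) - Y)
    ((((hX.smul θ).sub ((vmv_symm e).smul α)).add (Matrix.isSymm_one.smul β)).sub hY) (by
      intro v
      have := hq v
      rw [Matrix.sub_mulVec, Matrix.add_mulVec, Matrix.sub_mulVec, Matrix.smul_mulVec,
        Matrix.smul_mulVec, Matrix.smul_mulVec, Matrix.one_mulVec, dotProduct_sub, dotProduct_add,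
        dotProduct_sub, dotProduct_smul, dotProduct_smul, dotProduct_smul]
      have h5 : v ⬝ᵥ (Matrix.vecMulVec e e).mulVec v = (e ⬝ᵥ v) ^ 2 := by
        rw [Matrix.vecMulVec_mulVec]
        simp [dotProduct_comm v e]
        ring
      rw [h5]
      simp only [smul_eq_mul]
      linarith)
  rw [map_sub, map_add, map_sub, map_smul, map_smul, map_smul, hTY, hTX] at hfin
  simp only [smul_eq_mul] at hfin
  have q1 : θ * (m + 1) ≤ 0 := mul_nonpos_of_nonpos_of_nonneg hθ (by positivity)
  have q2 : β * T 1 ≤ β * (n * EE l Finset.univ m) := mul_le_mul_of_nonneg_left hTI hβ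
  have hα : 0 ≤ α := le_trans (by positivity) hαβ.le
  have q3 : α * EE l Finset.univ m ≤ α * T (Matrix.vecMulVec e e) :=
    mul_le_mul_of_nonneg_left hTe hα
  have q4 := mul_lt_mul_of_pos_right hαβ hS
  nlinarith

/-- subsolution inequality for the barrier matrix -/
theorem barrier_mat {n m : ℕ} (hn : 3 ≤ n) (hm : 2 * (m + 1) ≤ n) (a : Fin n → ℝ)
    (ha : ∀ i, 0 < a i) (y : Fin n → ℝ) (t δ R : ℝ) (ht : 0 < t) (hδ : δ < 1)
    (htδ : ∀ i, t * δ ≤ a i) (hR : 0 < R) (hy : y ⬝ᵥ y = R) :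
    matSk n (m + 1) (Matrix.diagonal a) <
      matSk n (m + 1) (Matrix.diagonal (fun i => a i + t) +
        (-(t * (2 + δ) / R)) • Matrix.vecMulVec y y) := by
  rw [matSk_diag_rank n m (by omega), matSk_diag n _ (by omega)]
  have hsum : ∑ i, y i ^ 2 = R := by rw [← hy]; simp [dotProduct, sq]
  have key : ∑ i, y i ^ 2 * (t * (2 + δ) * EE (fun i => a i + t) (Finset.univ.erase i) m) <
      ∑ i, y i ^ 2 * (EE (fun i => a i + t) Finset.univ (m + 1) - EE a Finset.univ (m + 1)) := by
    have hb : ∀ i, t * (2 + δ) * EE (fun i => a i + t) (Finset.univ.erase i) m <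
        EE (fun i => a i + t) Finset.univ (m + 1) - EE a Finset.univ (m + 1) := fun i => by
      have := EE_barrier a Finset.univ (fun i _ => ha i) i (Finset.mem_univ i) t δ ht hδ (htδ i) m
        (by simpa using hn) (by simpa using hm)
      linarith
    refine Finset.sum_lt_sum (fun i _ => mul_le_mul_of_nonneg_left (hb i).le (sq_nonneg _)) ?_
    by_contra hc
    push Not at hc
    have : ∀ i, y i = 0 := by
      intro i
      by_contra h
      have := hc i (Finset.mem_univ i)
      exact absurd this (not_le.2 (mul_lt_mul_of_pos_left (hb i) (by positivity)))
    rw [← hsum] at hR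
    simp [this] at hR
  rw [← Finset.sum_mul, hsum] at key
  have e : ∑ i, y i ^ 2 * (t * (2 + δ) * EE (fun i => a i + t) (Finset.univ.erase i) m) =
      t * (2 + δ) * ∑ i, y i ^ 2 * EE (fun i => a i + t) (Finset.univ.erase i) m := by
    rw [Finset.mul_sum]; exact Finset.sum_congr rfl fun i _ => by ring
  rw [e] at key
  set Q := ∑ i, y i ^ 2 * EE (fun i => a i + t) (Finset.univ.erase i) m
  have : t * (2 + δ) / R * Q < EE (fun i => a i + t) Finset.univ (m + 1) - EE a Finset.univ (m + 1) := by
    rw [div_mul_eq_mul_div, div_lt_iff₀ hR]; linarith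
  linarith

end MatAlg

lemma hess_apply (n : ℕ) (u : Euc n → ℝ) (x : Euc n) (i j : Fin n) :
    hessMat n u x i j = fderiv ℝ (fderiv ℝ u) x (ebasis n i) (ebasis n j) := by
  simp [hessMat, iteratedFDeriv_two_apply]

lemma euc_sum {n : ℕ} (v : Euc n) : v = ∑ i, v i • ebasis n i := by
  ext j
  simp [ebasis, Finset.sum_apply, Pi.single_apply]

lemma bil_quad {n : ℕ} (B : Euc n →L[ℝ] Euc n →L[ℝ] ℝ) (H : Matrix (Fin n) (Fin n) ℝ)
    (hH : ∀ i j, H i j = B (ebasis n i) (ebasis n j)) (v : Euc n) :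
    v.ofLp ⬝ᵥ H.mulVec v.ofLp = B v v := by
  conv_rhs => rw [euc_sum v]
  simp only [map_sum, map_smul, sum_apply, smul_apply,
    dotProduct, Matrix.mulVec, smul_eq_mul, hH, Finset.mul_sum]
  rw [Finset.sum_comm]
  refine Finset.sum_congr rfl fun i _ => Finset.sum_congr rfl fun j _ => ?_
  ring

lemma hess_quad {n : ℕ} (u : Euc n → ℝ) (x v : Euc n) :
    v.ofLp ⬝ᵥ (hessMat n u x).mulVec v.ofLp = fderiv ℝ (fderiv ℝ u) x v v :=
  bil_quad _ _ (hess_apply n u x) v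

lemma hess_symm {n : ℕ} {u : Euc n → ℝ} {x : Euc n} (hu : ContDiffAt ℝ 2 u x) :
    (hessMat n u x).IsSymm := by
  ext i j
  rw [Matrix.transpose_apply, hess_apply, hess_apply]
  exact (hu.isSymmSndFDerivAt (by simp)).eq _ _

lemma line_deriv {n : ℕ} {F : Type*} [NormedAddCommGroup F] [NormedSpace ℝ F]
    {h : Euc n → F} {x v : Euc n} {t : ℝ}
    (hh : DifferentiableAt ℝ h (x + t • v)) :
    HasDerivAt (fun s : ℝ => h (x + s • v)) (fderiv ℝ h (x + t • v) v) t := by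
  have h1 : HasDerivAt (fun s : ℝ => x + s • v) v t := by
    simpa using ((hasDerivAt_id t).smul_const v).const_add x
  exact hh.hasFDerivAt.comp_hasDerivAt t h1

lemma line_tendsto {n : ℕ} (x v : Euc n) :
    Tendsto (fun s : ℝ => x + s • v) (𝓝 0) (𝓝 x) := by
  have : Continuous (fun s : ℝ => x + s • v) := by fun_prop
  simpa using this.tendsto 0

lemma max_1d {g g1 : ℝ → ℝ} {g2 : ℝ} (h1 : ∀ᶠ s in 𝓝 0, HasDerivAt g (g1 s) s)
    (h2 : HasDerivAt g1 g2 0) (hm : IsLocalMax g 0) : g1 0 = 0 ∧ g2 ≤ 0 := by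
  have hd1 : deriv g =ᶠ[𝓝 0] g1 := by
    filter_upwards [h1] with s hs using hs.deriv
  have e2 : deriv (deriv g) 0 = g2 := by rw [hd1.deriv_eq, h2.deriv]
  refine ⟨hd1.self_of_nhds ▸ hm.deriv_eq_zero, ?_⟩
  by_contra hpos
  push Not at hpos
  have hmin : IsLocalMin g 0 :=
    isLocalMin_of_deriv_deriv_pos (by rw [e2]; exact hpos) hm.deriv_eq_zero
      h1.self_of_nhds.continuousAt
  have hc : g =ᶠ[𝓝 0] fun _ => g 0 := by
    filter_upwards [hm, hmin] with s a b using le_antisymm a b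
  have h3 : deriv g =ᶠ[𝓝 0] fun _ => 0 := by
    have := hc.deriv
    simpa using this
  have h4 : deriv (deriv g) 0 = 0 := by rw [h3.deriv_eq]; simp
  rw [e2] at h4
  exact hpos.ne' h4

lemma line_d1 {n : ℕ} {h : Euc n → ℝ} {x : Euc n} (hh : ContDiffAt ℝ 2 h x) (v : Euc n) :
    ∀ᶠ s : ℝ in 𝓝 0, HasDerivAt (fun s : ℝ => h (x + s • v)) (fderiv ℝ h (x + s • v) v) s := by
  have hev : ∀ᶠ y in 𝓝 x, DifferentiableAt ℝ h y := by
    filter_upwards [hh.eventually (by simp)] with y hy using hy.differentiableAt (by simp)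
  filter_upwards [(line_tendsto x v).eventually hev] with s hs using line_deriv hs

lemma line_d2 {n : ℕ} {h : Euc n → ℝ} {x : Euc n} (hh : ContDiffAt ℝ 2 h x) (v w : Euc n) :
    HasDerivAt (fun s : ℝ => fderiv ℝ h (x + s • v) w) (fderiv ℝ (fderiv ℝ h) x v w) 0 := by
  have hdd : DifferentiableAt ℝ (fderiv ℝ h) x :=
    (hh.fderiv_right (m := 1) (by norm_num)).differentiableAt (by simp)
  have h1 := line_deriv (h := fderiv ℝ h) (x := x) (v := v) (t := 0) (by simpa using hdd)
  have := h1.clm_apply (hasDerivAt_const 0 w)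
  simpa using this

lemma line_max {n : ℕ} {h : Euc n → ℝ} {x : Euc n} (hm : IsLocalMax h x) (v : Euc n) :
    IsLocalMax (fun s : ℝ => h (x + s • v)) 0 := by
  have := (line_tendsto x v).eventually hm
  simpa [IsLocalMax, IsMaxFilter] using this

lemma comp_max {n k : ℕ} (hk : k ≤ n) {u p : Euc n → ℝ} {x : Euc n} (hu : ContDiffAt ℝ 2 u x)
    (hp : ContDiffAt ℝ 2 p x) (hm : IsLocalMax (fun y => u y - p y) x)
    (hG : MG n k (hessMat n u x)) (j : ℕ) (hj1 : 1 ≤ j) (hj : j ≤ k) :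
    matSk n j (hessMat n u x) ≤ matSk n j (hessMat n p x) := by
  have hsy : (hessMat n p x - hessMat n u x).IsSymm := by
    unfold Matrix.IsSymm
    rw [Matrix.transpose_sub, (hess_symm hp), (hess_symm hu)]
  have := matSk_mono hk (hessMat n u x) (hessMat n p x - hessMat n u x) (hess_symm hu) hG hsy ?_
    j hj1 hj
  · simpa using this
  · intro v
    have h1 := hess_quad u x (WithLp.toLp 2 v)
    have h2 := hess_quad p x (WithLp.toLp 2 v)
    simp only at h1 h2
    rw [Matrix.sub_mulVec, dotProduct_sub, h1, h2]
    have a1 : ∀ᶠ s : ℝ in 𝓝 0, HasDerivAt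
        (fun s : ℝ => u (x + s • WithLp.toLp 2 v) - p (x + s • WithLp.toLp 2 v))
        (fderiv ℝ u (x + s • WithLp.toLp 2 v) (WithLp.toLp 2 v) -
          fderiv ℝ p (x + s • WithLp.toLp 2 v) (WithLp.toLp 2 v)) s := by
      filter_upwards [line_d1 hu (WithLp.toLp 2 v), line_d1 hp (WithLp.toLp 2 v)] with s q r
        using q.sub r
    have := max_1d a1 ((line_d2 hu _ _).sub (line_d2 hp _ _)) (line_max hm (WithLp.toLp 2 v))
    linarith [this.2]

lemma hess_of_line {n : ℕ} {p : Euc n → ℝ} {x : Euc n} (hp : ContDiffAt ℝ 2 p x)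
    (q : Fin n → Euc n → ℝ) (H : Matrix (Fin n) (Fin n) ℝ)
    (h1 : ∀ j, ∀ᶠ y in 𝓝 x, HasDerivAt (fun t : ℝ => p (y + t • ebasis n j)) (q j y) 0)
    (h2 : ∀ i j, HasDerivAt (fun s : ℝ => q j (x + s • ebasis n i)) (H i j) 0) :
    hessMat n p x = H := by
  ext i j
  rw [hess_apply]
  refine (line_d2 hp (ebasis n i) (ebasis n j)).unique ((h2 i j).congr_of_eventuallyEq ?_)
  have hev : ∀ᶠ y in 𝓝 x, DifferentiableAt ℝ p y := by
    filter_upwards [hp.eventually (by simp)] with y hy using hy.differentiableAt (by simp)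
  have h3 : ∀ᶠ y in 𝓝 x, fderiv ℝ p y (ebasis n j) = q j y := by
    filter_upwards [hev, h1 j] with y hy hq
    have := line_deriv (h := p) (x := y) (v := ebasis n j) (t := 0) (by simpa using hy)
    simpa using this.unique hq
  exact (line_tendsto x _).eventually h3

lemma quadA_diag {n : ℕ} (a : Fin n → ℝ) (x : Euc n) :
    quadA n (Matrix.diagonal a) x = (1 / 2) * ∑ i, a i * x i ^ 2 := by
  unfold quadA
  congr 1
  refine Finset.sum_congr rfl fun i _ => ?_
  rw [Finset.sum_eq_single i]
  · rw [Matrix.diagonal_apply_eq]; ring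
  · intro j _ hj
    rw [Matrix.diagonal_apply_ne' _ hj]; ring
  · simp

lemma quadA_line {n : ℕ} (a : Fin n → ℝ) (y : Euc n) (j : Fin n) (t : ℝ) :
    quadA n (Matrix.diagonal a) (y + t • ebasis n j) =
      quadA n (Matrix.diagonal a) y + t * (a j * y j) + a j / 2 * t ^ 2 := by
  rw [quadA_diag, quadA_diag]
  have : ∀ i, a i * (y + t • ebasis n j) i ^ 2 =
      a i * y i ^ 2 + (if i = j then a i * (2 * t * y i + t ^ 2) else 0) := by
    intro i
    simp only [ebasis, PiLp.add_apply, PiLp.smul_apply, PiLp.single_apply, EuclideanSpace.single, smul_eq_mul]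
    split_ifs <;> ring
  simp only [this, Finset.sum_add_distrib, Finset.sum_ite_eq', Finset.mem_univ, if_true]
  ring

lemma norm_line {n : ℕ} (y x₀ : Euc n) (j : Fin n) (t : ℝ) :
    ‖y + t • ebasis n j - x₀‖ ^ 2 = ‖y - x₀‖ ^ 2 + 2 * t * (y j - x₀ j) + t ^ 2 := by
  rw [EuclideanSpace.norm_sq_eq, EuclideanSpace.norm_sq_eq]
  have : ∀ i, ‖(y + t • ebasis n j - x₀) i‖ ^ 2 =
      ‖(y - x₀) i‖ ^ 2 + (if i = j then (2 * t * (y i - x₀ i) + t ^ 2) else 0) := by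
    intro i
    simp only [ebasis, PiLp.add_apply, PiLp.sub_apply, PiLp.smul_apply,
      PiLp.single_apply, EuclideanSpace.single, smul_eq_mul, Real.norm_eq_abs, sq_abs]
    split_ifs <;> ring
  simp only [this, Finset.sum_add_distrib, Finset.sum_ite_eq', Finset.mem_univ, if_true]
  ring

lemma quadA_contDiff {n : ℕ} (a : Fin n → ℝ) :
    ContDiff ℝ 2 (quadA n (Matrix.diagonal a)) := by
  rw [show quadA n (Matrix.diagonal a) = fun x => (1 / 2) * ∑ i, a i * x i ^ 2 from
    funext (quadA_diag a)]
  fun_prop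

/-- Barrier function. -/
noncomputable def barr (n : ℕ) (a : Fin n → ℝ) (x₀ : Euc n) (c M : ℝ) (g : ℝ → ℝ) (x : Euc n) : ℝ :=
  quadA n (Matrix.diagonal a) x + c + M * g (‖x - x₀‖ ^ 2)

lemma barr_contDiff {n : ℕ} (a : Fin n → ℝ) (x₀ : Euc n) (c M : ℝ) (g : ℝ → ℝ) (x : Euc n)
    (hg : ContDiffAt ℝ 2 g (‖x - x₀‖ ^ 2)) : ContDiffAt ℝ 2 (barr n a x₀ c M g) x := by
  unfold barr
  have h1 : ContDiffAt ℝ 2 (fun y : Euc n => ‖y - x₀‖ ^ 2) x := by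
    have : ContDiff ℝ 2 (fun y : Euc n => ‖y - x₀‖ ^ 2) := by
      exact (contDiff_id.sub contDiff_const).norm_sq ℝ
    exact this.contDiffAt
  have h2 : ContDiffAt ℝ 2 (fun y : Euc n => g (‖y - x₀‖ ^ 2)) x :=
    ContDiffAt.comp x hg h1
  exact ((quadA_contDiff a).contDiffAt.add contDiffAt_const).add (contDiffAt_const.mul h2)

lemma barr_hess {n : ℕ} (a : Fin n → ℝ) (x₀ : Euc n) (c M : ℝ) (g g1 : ℝ → ℝ) (g2 : ℝ) (x : Euc n)
    (hg : ContDiffAt ℝ 2 g (‖x - x₀‖ ^ 2)) (hx : x ≠ x₀)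
    (hg1 : ∀ R : ℝ, 0 < R → HasDerivAt g (g1 R) R)
    (hg2 : HasDerivAt g1 g2 (‖x - x₀‖ ^ 2)) :
    hessMat n (barr n a x₀ c M g) x = Matrix.diagonal (fun i => a i + 2 * M * g1 (‖x - x₀‖ ^ 2)) +
      (4 * M * g2) • Matrix.vecMulVec (x - x₀).ofLp (x - x₀).ofLp := by
  refine hess_of_line (barr_contDiff a x₀ c M g x hg)
    (fun j y => a j * y j + M * (g1 (‖y - x₀‖ ^ 2) * (2 * (y j - x₀ j)))) _ ?_ ?_
  · intro j
    filter_upwards [isOpen_ne.mem_nhds hx] with y hy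
    have hpos : 0 < ‖y - x₀‖ ^ 2 := by
      have := norm_pos_iff.2 (sub_ne_zero.2 hy)
      positivity
    unfold barr
    simp only [quadA_line, norm_line]
    have e1 : HasDerivAt (fun t : ℝ => ‖y - x₀‖ ^ 2 + 2 * t * (y j - x₀ j) + t ^ 2)
        (2 * (y j - x₀ j)) 0 := by
      have := ((((hasDerivAt_id (0:ℝ)).const_mul 2).mul_const (y j - x₀ j)).const_add
        (‖y - x₀‖ ^ 2)).fun_add ((hasDerivAt_id (0:ℝ)).fun_pow 2)
      simpa using this
    have e2 := HasDerivAt.comp (0:ℝ) (h₂ := g) (h₂' := g1 (‖y - x₀‖ ^ 2))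
      (by simpa using hg1 _ hpos) e1
    have e3 : HasDerivAt (fun t : ℝ => quadA n (Matrix.diagonal a) y + t * (a j * y j)
        + a j / 2 * t ^ 2) (a j * y j) 0 := by
      have := (((hasDerivAt_id (0:ℝ)).mul_const (a j * y j)).const_add
        (quadA n (Matrix.diagonal a) y)).fun_add (((hasDerivAt_id (0:ℝ)).fun_pow 2).const_mul (a j / 2))
      simpa using this
    exact (e3.add_const c).add (e2.const_mul M)
  · intro i j
    have hc : ∀ s : ℝ, (x + s • ebasis n i) j = x j + s * (if j = i then 1 else 0) := by
      intro s
      simp [ebasis, Pi.single_apply]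
    simp only [hc, norm_line]
    have e1 : HasDerivAt (fun t : ℝ => ‖x - x₀‖ ^ 2 + 2 * t * (x i - x₀ i) + t ^ 2)
        (2 * (x i - x₀ i)) 0 := by
      have := ((((hasDerivAt_id (0:ℝ)).const_mul 2).mul_const (x i - x₀ i)).const_add
        (‖x - x₀‖ ^ 2)).fun_add ((hasDerivAt_id (0:ℝ)).fun_pow 2)
      simpa using this
    have e2 := HasDerivAt.comp (0:ℝ) (h₂ := g1) (h₂' := g2) (by simpa using hg2) e1
    have e3 : HasDerivAt (fun s : ℝ => x j + s * (if j = i then (1:ℝ) else 0))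
        (if j = i then 1 else 0) 0 := by
      simpa using ((hasDerivAt_id (0:ℝ)).mul_const (if j = i then (1:ℝ) else 0)).const_add (x j)
    have := (e3.const_mul (a j)).add ((e2.mul ((e3.sub_const (x₀ j)).const_mul 2)).const_mul M)
    refine this.congr_deriv ?_
    simp only [Matrix.add_apply, Matrix.diagonal_apply, Matrix.smul_apply, Matrix.vecMulVec_apply,
      PiLp.sub_apply, smul_eq_mul, Function.comp, mul_zero, zero_mul, add_zero]
    by_cases hij : i = j
    · subst hij
      simp
      ring
    · have : ¬ j = i := fun h => hij h.symm
      simp [hij, this]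
      ring

lemma ext_max {n : ℕ} (w : Euc n → ℝ) (x₀ x1 : Euc n) (ε R : ℝ)
    (hw : ContinuousOn w (Metric.ball x₀ ε)ᶜ)
    (hs : ∀ x ∈ Metric.sphere x₀ ε, w x ≤ 0) (h1 : x1 ∈ (Metric.ball x₀ ε)ᶜ) (h1R : ‖x1‖ ≤ R)
    (hpos : 0 < w x1) (hR : ∀ x ∈ (Metric.ball x₀ ε)ᶜ, ‖x‖ = R → w x < w x1) :
    ∃ x ∈ (closure (Metric.ball x₀ ε))ᶜ, IsLocalMax w x := by
  have hK : IsCompact (Metric.closedBall (0 : Euc n) R ∩ (Metric.ball x₀ ε)ᶜ) :=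
    (isCompact_closedBall _ _).inter_right Metric.isOpen_ball.isClosed_compl
  obtain ⟨x, hx, hmax⟩ := hK.exists_isMaxOn ⟨x1, by simpa using h1R, h1⟩
    (hw.mono Set.inter_subset_right)
  have hge : w x1 ≤ w x := hmax ⟨by simpa using h1R, h1⟩
  have hxs : x ∈ (Metric.closedBall x₀ ε)ᶜ := by
    intro hc
    have : x ∈ Metric.sphere x₀ ε := by
      have h2 := hx.2
      simp only [Metric.mem_closedBall, Set.mem_compl_iff, Metric.mem_ball, Metric.mem_sphere] at *
      linarith
    linarith [hs x this]
  have hxR : x ∈ Metric.ball (0 : Euc n) R := by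
    have h2 := hx.1
    rw [mem_closedBall_zero_iff] at h2
    rw [mem_ball_zero_iff]
    refine lt_of_le_of_ne h2 fun he => ?_
    linarith [hR x hx.2 he]
  refine ⟨x, fun hc => hxs (Metric.closure_ball_subset_closedBall hc), ?_⟩
  filter_upwards [Metric.isOpen_ball.mem_nhds hxR,
    Metric.isClosed_closedBall.isOpen_compl.mem_nhds hxs] with y hy1 hy2
  exact hmax ⟨Metric.ball_subset_closedBall hy1,
    fun hc => hy2 (Metric.ball_subset_closedBall hc)⟩

lemma sol_contDiffAt {n k : ℕ} {a : Fin n → ℝ} {x₀ : Euc n} {ε c : ℝ} {u : Euc n → ℝ}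
    (h : ExtBallSol n k a x₀ ε c u) {x : Euc n} (hx : x ∈ (Metric.ball x₀ ε)ᶜ) :
    ContDiffAt ℝ (⊤ : ℕ∞) u x := by
  obtain ⟨⟨U, hU, hS, hu⟩, -⟩ := h
  exact hu.contDiffAt (hU.mem_nhds (hS hx))

lemma sol_cont {n k : ℕ} {a : Fin n → ℝ} {x₀ : Euc n} {ε c : ℝ} {u : Euc n → ℝ}
    (h : ExtBallSol n k a x₀ ε c u) : ContinuousOn u (Metric.ball x₀ ε)ᶜ :=
  fun _ hx => (sol_contDiffAt h hx).continuousAt.continuousWithinAt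

lemma compl_clos {n : ℕ} {x₀ x : Euc n} {ε : ℝ} (hx : x ∈ (closure (Metric.ball x₀ ε))ᶜ) :
    x ∈ (Metric.ball x₀ ε)ᶜ := fun h => hx (subset_closure h)

lemma sol_C2 {n k : ℕ} {a : Fin n → ℝ} {x₀ : Euc n} {ε c : ℝ} {u : Euc n → ℝ}
    (h : ExtBallSol n k a x₀ ε c u) {x : Euc n} (hx : x ∈ (closure (Metric.ball x₀ ε))ᶜ) :
    ContDiffAt ℝ 2 u x :=
  (sol_contDiffAt h (compl_clos hx)).of_le (WithTop.coe_le_coe.2 (le_top : (2 : ℕ∞) ≤ ⊤))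

lemma quadA_nonneg {n : ℕ} {a : Fin n → ℝ} (ha : ∀ i, 0 < a i) (x : Euc n) :
    0 ≤ quadA n (Matrix.diagonal a) x := by
  rw [quadA_diag]
  have : 0 ≤ ∑ i, a i * x i ^ 2 := Finset.sum_nonneg fun i _ => mul_nonneg (ha i).le (sq_nonneg _)
  linarith

lemma cocompact_small {n : ℕ} {w : Euc n → ℝ} (hw : Tendsto w (cocompact (Euc n)) (𝓝 0)) {m : ℝ}
    (hm : 0 < m) : ∃ r : ℝ, ∀ x : Euc n, r < ‖x‖ → w x < m := by
  obtain ⟨r, hr⟩ := Metric.closedBall_compl_subset_of_mem_cocompact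
    (hw.eventually (gt_mem_nhds hm)) (0 : Euc n)
  exact ⟨r, fun x hx => hr (by simpa using hx)⟩

lemma upper_bd {n k : ℕ} (hk1 : 1 ≤ k) (hkn : k ≤ n) {a : Fin n → ℝ} (ha : ∀ i, 0 < a i)
    (hA : matSk n k (Matrix.diagonal a) = 1) {x₀ : Euc n} {ε c : ℝ} (hε : 0 < ε) (hc : 0 < c)
    {u : Euc n → ℝ} (h : ExtBallSol n k a x₀ ε c u) {x : Euc n} (hx : x ∈ (Metric.ball x₀ ε)ᶜ) :
    u x ≤ quadA n (Matrix.diagonal a) x + c := by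
  by_contra hcon
  push Not at hcon
  set m := u x - (quadA n (Matrix.diagonal a) x + c) with hm
  have hm0 : 0 < m := by rw [hm]; linarith
  obtain ⟨r, hr⟩ := cocompact_small h.2.2.2.2 (half_pos hm0)
  set R := max (r + 1) ‖x‖ with hR
  have hrR : r < R := lt_of_lt_of_le (by linarith) (le_max_left _ _)
  obtain ⟨Q, hQ⟩ := (isCompact_closedBall (0 : Euc n) R).exists_bound_of_continuousOn
    (quadA_contDiff a).continuous.continuousOn
  have hQ0 : 0 ≤ Q := (norm_nonneg _).trans (hQ x (by simp [hR]))
  set d := min (1 / 2) (m / (4 * (Q + 1))) with hd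
  have hd0 : 0 < d := by rw [hd]; positivity
  have hd1 : d ≤ 1 / 2 := min_le_left _ _
  have hdQ : d * Q < m / 2 := by
    have h1 : d ≤ m / (4 * (Q + 1)) := min_le_right _ _
    have h2 : d * (4 * (Q + 1)) ≤ m := by rwa [le_div_iff₀ (by positivity)] at h1
    nlinarith
  set p : Euc n → ℝ := barr n (fun i => (1 - d) * a i) x₀ c 0 (fun _ => 0) with hp
  have hpe : ∀ y, p y = (1 - d) * quadA n (Matrix.diagonal a) y + c := by
    intro y
    simp only [hp, barr, quadA_diag, zero_mul, add_zero, mul_assoc]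
    rw [← Finset.mul_sum]
    ring
  have key : ∃ x ∈ (closure (Metric.ball x₀ ε))ᶜ, IsLocalMax (fun y => u y - p y) x := by
    refine ext_max (fun y => u y - p y) x₀ x ε R
      ((sol_cont h).sub ?_) ?_ hx (le_max_right _ _) ?_ ?_
    · have : Continuous p := by
        rw [funext hpe]
        exact ((quadA_contDiff a).continuous.const_mul _).add_const _
      exact this.continuousOn
    · intro y hy
      have h1 := h.2.2.2.1 y hy
      have h2 := hpe y
      have h3 := quadA_nonneg ha y
      simp only [h1, h2]
      nlinarith
    · rw [hpe]
      have h3 := quadA_nonneg ha x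
      nlinarith
    · intro y hy hyR
      have h1 := hr y (by rw [hyR]; exact hrR)
      have h2 := hQ y (by simp [hyR])
      rw [Real.norm_eq_abs] at h2
      have h3 := (le_abs_self _).trans h2
      simp only [hpe]
      have h4 := quadA_nonneg ha x
      have h5 := mul_nonneg hd0.le h4
      have h6 := mul_le_mul_of_nonneg_left h3 hd0.le
      rw [hm] at h1 hdQ
      linarith
  obtain ⟨z, hz, hzm⟩ := key
  have hzx : z ≠ x₀ := fun he => compl_clos hz (by rw [he]; simpa using hε)
  have hpC : ContDiffAt ℝ 2 p z := barr_contDiff _ _ _ _ _ _ contDiffAt_const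
  have hle := comp_max hkn (sol_C2 h hz) hpC hzm (h.2.1 z hz) k hk1 le_rfl
  rw [show matSk n k (hessMat n u z) = 1 from h.2.2.1 z hz, hp,
    barr_hess _ x₀ c 0 (fun _ => 0) (fun _ => 0) 0 z contDiffAt_const hzx
      (fun R _ => hasDerivAt_const R 0) (hasDerivAt_const _ 0)] at hle
  have he : (Matrix.diagonal (fun i => (1 - d) * a i + 2 * 0 * (0:ℝ)) +
    (4 * 0 * (0:ℝ)) • Matrix.vecMulVec (z - x₀).ofLp (z - x₀).ofLp) =
    (1 - d) • Matrix.diagonal a := by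
    ext i j
    by_cases hij : i = j
    · subst hij; simp
    · simp [hij]
  rw [he, matSk_smul hkn _ (by simp [Matrix.IsSymm]), hA, mul_one] at hle
  have : (1 - d) ^ k < 1 := pow_lt_one₀ (by linarith) (by linarith) (by omega)
  linarith

/-- radial profile -/
noncomputable def gg (R : ℝ) : ℝ := - Real.arsinh ((√R)⁻¹)

/-- derivative of the radial profile -/
noncomputable def gg1 (R : ℝ) : ℝ := 1 / 2 * (R⁻¹ * (√(1 + R))⁻¹)

lemma gg_contDiff {R : ℝ} (hR : 0 < R) : ContDiffAt ℝ 2 gg R := by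
  have h1 : ContDiffAt ℝ 2 (fun R : ℝ => (√R)⁻¹) R :=
    (Real.contDiffAt_sqrt hR.ne').inv (Real.sqrt_pos.2 hR).ne'
  exact (Real.contDiff_arsinh.contDiffAt.comp R h1).neg

lemma gg_deriv (R : ℝ) (hR : 0 < R) : HasDerivAt gg (gg1 R) R := by
  have hs := Real.sqrt_pos.2 hR
  have h1 := ((Real.hasDerivAt_sqrt hR.ne').fun_inv hs.ne').arsinh.fun_neg
  refine h1.congr_deriv ?_
  unfold gg1
  have h2 : √(1 + ((√R)⁻¹) ^ 2) = √(1 + R) / √R := by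
    rw [inv_pow, Real.sq_sqrt hR.le, ← Real.sqrt_div (by linarith)]
    congr 1
    field_simp
    ring
  have h3 : √R ^ 2 = R := Real.sq_sqrt hR.le
  have h4 : 0 < √(1 + R) := Real.sqrt_pos.2 (by linarith)
  rw [h2, h3, smul_eq_mul]
  field_simp

lemma gg1_deriv (R : ℝ) (hR : 0 < R) :
    HasDerivAt gg1 (- gg1 R / R * (1 + R / (1 + R) / 2)) R := by
  have h0 : HasDerivAt (fun R : ℝ => √(1 + R)) (1 / (2 * √(1 + R))) R := by
    simpa using ((hasDerivAt_id R).const_add 1).sqrt (by simp; linarith)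
  have h4 : 0 < √(1 + R) := Real.sqrt_pos.2 (by linarith)
  have h1 := (((hasDerivAt_id R).fun_inv hR.ne').fun_mul (h0.fun_inv h4.ne')).const_mul (1 / 2)
  refine h1.congr_deriv ?_
  unfold gg1
  have h3 : √(1 + R) ^ 2 = 1 + R := Real.sq_sqrt (by linarith)
  simp only [id]
  rw [h3]
  have : 0 < 1 + R := by linarith
  field_simp
  ring

lemma lower_bd {n k : ℕ} (hn : 3 ≤ n) (hk1 : 1 ≤ k) (hkn : 2 * k ≤ n) {a : Fin n → ℝ}
    (ha : ∀ i, 0 < a i)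
    (hA : matSk n k (Matrix.diagonal a) = 1) {x₀ : Euc n} {ε c C : ℝ} (hε : 0 < ε)
    {u : Euc n → ℝ} (h : ExtBallSol n k a x₀ ε c u)
    (hC : ∀ y ∈ Metric.sphere x₀ ε, quadA n (Matrix.diagonal a) y + c ≤ C)
    (hC0 : 0 < C)
    (hCa : ∀ i, C / Real.arsinh ε⁻¹ ≤ a i)
    {x : Euc n} (hx : x ∈ (Metric.ball x₀ ε)ᶜ) :
    quadA n (Matrix.diagonal a) x + c - C / Real.arsinh ε⁻¹ * Real.arsinh (‖x - x₀‖⁻¹) ≤ u x := by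
  have hkn' : k ≤ n := by omega
  have hars : 0 < Real.arsinh ε⁻¹ := Real.arsinh_pos_iff.2 (inv_pos.2 hε)
  set M := C / Real.arsinh ε⁻¹ with hM
  have hM0 : 0 < M := by positivity
  set p : Euc n → ℝ := barr n a x₀ c M gg with hp
  have hpe : ∀ y, p y = quadA n (Matrix.diagonal a) y + c - M * Real.arsinh (‖y - x₀‖⁻¹) := by
    intro y
    simp only [hp, barr, gg, Real.sqrt_sq (norm_nonneg _)]
    ring
  have hne : ∀ y ∈ (Metric.ball x₀ ε)ᶜ, 0 < ‖y - x₀‖ := by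
    intro y hy
    simp only [Set.mem_compl_iff, Metric.mem_ball, dist_eq_norm, not_lt] at hy
    linarith
  have hpC : ∀ y ∈ (Metric.ball x₀ ε)ᶜ, ContDiffAt ℝ 2 p y := fun y hy =>
    barr_contDiff _ _ _ _ _ _ (gg_contDiff (pow_pos (hne y hy) 2))
  by_contra hcon
  push Not at hcon
  rw [← hpe] at hcon
  obtain ⟨r, hr⟩ := cocompact_small (w := fun y => (quadA n (Matrix.diagonal a) y + c) - u y)
    (by simpa using h.2.2.2.2.neg) (sub_pos.2 hcon)
  set R := max (r + 1) ‖x‖ with hR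
  have hrR : r < R := lt_of_lt_of_le (by linarith) (le_max_left _ _)
  have key : ∃ x ∈ (closure (Metric.ball x₀ ε))ᶜ, IsLocalMax (fun y => p y - u y) x := by
    refine ext_max (fun y => p y - u y) x₀ x ε R
      (ContinuousOn.sub (fun y hy => (hpC y hy).continuousAt.continuousWithinAt) (sol_cont h)) ?_ hx
      (le_max_right _ _) (sub_pos.2 hcon) ?_
    · intro y hy
      have h1 := h.2.2.2.1 y hy
      simp only [h1, hpe]
      rw [mem_sphere_iff_norm] at hy
      rw [hy, hM, div_mul_cancel₀ _ hars.ne']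
      linarith [hC y (mem_sphere_iff_norm.2 hy)]
    · intro y hy hyR
      refine lt_of_le_of_lt ?_ (hr y (by rw [hyR]; exact hrR))
      simp only [hpe]
      have : 0 ≤ M * Real.arsinh (‖y - x₀‖⁻¹) :=
        mul_nonneg hM0.le (Real.arsinh_nonneg_iff.2 (by positivity))
      linarith
  obtain ⟨z, hz, hzm⟩ := key
  have hz' := compl_clos hz
  have hz0 := hne z hz'
  have hzx : z ≠ x₀ := fun he => by simp [he] at hz0
  set Q := ‖z - x₀‖ ^ 2 with hQ
  have hQ0 : 0 < Q := by positivity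
  have hh : hessMat n p z = _ := barr_hess a x₀ c M gg gg1 _ z (gg_contDiff hQ0) hzx gg_deriv
    (gg1_deriv Q hQ0)
  have hg1 : 0 < gg1 Q := by
    unfold gg1
    have : 0 < √(1 + Q) := Real.sqrt_pos.2 (by linarith)
    positivity
  have hyR : (z - x₀).ofLp ⬝ᵥ (z - x₀).ofLp = Q := by
    rw [hQ, EuclideanSpace.norm_sq_eq]
    simp [dotProduct, sq]
  have hbig : ∀ j, 1 ≤ j → j ≤ k → matSk n j (Matrix.diagonal a) < matSk n j (hessMat n p z) := by
    intro j hj1 hjk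
    obtain ⟨m, rfl⟩ : ∃ m, j = m + 1 := ⟨j - 1, by omega⟩
    have := barrier_mat hn (m := m) (by omega) a ha (z - x₀).ofLp (2 * M * gg1 Q) (Q / (1 + Q)) Q
      (by positivity) (by rw [div_lt_one (by linarith)]; linarith) ?_ hQ0 hyR
    · rw [hh]
      refine this.trans_eq ?_
      congr 3
      field_simp
      ring
    · intro i
      refine le_trans ?_ (hCa i)
      unfold gg1
      have h1 : 1 ≤ √(1 + Q) := by
        rw [Real.one_le_sqrt]; linarith
      have : 2 * M * (1 / 2 * (Q⁻¹ * (√(1 + Q))⁻¹)) * (Q / (1 + Q)) =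
        M * ((√(1 + Q))⁻¹ * (1 + Q)⁻¹) := by field_simp
      rw [this]
      have h2 : (√(1 + Q))⁻¹ ≤ 1 := inv_le_one_of_one_le₀ h1
      have h3 : (1 + Q)⁻¹ ≤ 1 := inv_le_one_of_one_le₀ (by linarith)
      have h4 : (√(1 + Q))⁻¹ * (1 + Q)⁻¹ ≤ 1 := mul_le_one₀ h2 (by positivity) h3
      nlinarith
  have hMG : MG n k (hessMat n p z) := by
    intro j hj1 hjk
    refine lt_trans ?_ (hbig j hj1 hjk)
    rw [matSk_diag n _ (by omega)]
    exact EE_pos _ _ (fun i _ => ha i) _ (by simp; omega)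
  have := comp_max hkn' (hpC z hz') (sol_C2 h hz) hzm hMG k hk1 le_rfl
  rw [show matSk n k (hessMat n u z) = 1 from h.2.2.1 z hz] at this
  have := hbig k hk1 le_rfl
  linarith

lemma dot_inner {n : ℕ} (v w : Euc n) : v.ofLp ⬝ᵥ w.ofLp = inner ℝ v w := by
  rw [PiLp.inner_apply]
  simp [dotProduct, mul_comm]

lemma d3_swap12 {n : ℕ} {u : Euc n → ℝ} {x : Euc n} (hu : ContDiffAt ℝ 3 u x) (a b c : Euc n) :
    fderiv ℝ (fderiv ℝ (fderiv ℝ u)) x a b c = fderiv ℝ (fderiv ℝ (fderiv ℝ u)) x b a c := by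
  have h1 : ContDiffAt ℝ 2 (fderiv ℝ u) x := hu.fderiv_right (by norm_num)
  have := (h1.isSymmSndFDerivAt (by simp)).eq a b
  rw [this]

lemma d3_line {n : ℕ} {u : Euc n → ℝ} {x : Euc n} (hu : ContDiffAt ℝ 3 u x) (a b c : Euc n) :
    HasDerivAt (fun s : ℝ => fderiv ℝ (fderiv ℝ u) (x + s • a) b c)
      (fderiv ℝ (fderiv ℝ (fderiv ℝ u)) x a b c) 0 := by
  have h1 : ContDiffAt ℝ 2 (fderiv ℝ u) x := hu.fderiv_right (by norm_num)
  have hdd : DifferentiableAt ℝ (fderiv ℝ (fderiv ℝ u)) x :=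
    (h1.fderiv_right (m := 1) (by norm_num)).differentiableAt (by simp)
  have h2 := line_deriv (h := fderiv ℝ (fderiv ℝ u)) (x := x) (v := a) (t := 0) (by simpa using hdd)
  have := (h2.clm_apply (hasDerivAt_const 0 b)).clm_apply (hasDerivAt_const 0 c)
  simpa using this

lemma ev2 {n : ℕ} {u : Euc n → ℝ} {x : Euc n} (hu : ContDiffAt ℝ 3 u x) :
    ∀ᶠ y in 𝓝 x, ContDiffAt ℝ 3 u y := hu.eventually (by simp)

lemma d3_swap23 {n : ℕ} {u : Euc n → ℝ} {x : Euc n} (hu : ContDiffAt ℝ 3 u x) (a b c : Euc n) :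
    fderiv ℝ (fderiv ℝ (fderiv ℝ u)) x a b c = fderiv ℝ (fderiv ℝ (fderiv ℝ u)) x a c b := by
  refine (d3_line hu a b c).unique ((d3_line hu a c b).congr_of_eventuallyEq ?_)
  filter_upwards [(line_tendsto x a).eventually (ev2 hu)] with s hs
  exact ((hs.of_le (by norm_num) : ContDiffAt ℝ 2 u _).isSymmSndFDerivAt (by simp)).eq b c

lemma rho_line {n : ℕ} (y v : Euc n) (R s : ℝ) :
    HasDerivAt (fun s : ℝ => R ^ 2 - ‖y + s • v‖ ^ 2) (-2 * inner ℝ (y + s • v) v) s := by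
  have h1 : HasDerivAt (fun s : ℝ => y + s • v) v s := by
    simpa using ((hasDerivAt_id s).smul_const v).const_add y
  have := (h1.norm_sq).const_sub (R ^ 2)
  refine this.congr_deriv ?_
  ring

lemma rho_line2 {n : ℕ} (y v : Euc n) :
    HasDerivAt (fun s : ℝ => -2 * inner ℝ (y + s • v) v) (-2 * ‖v‖ ^ 2) 0 := by
  have h1 : HasDerivAt (fun s : ℝ => y + s • v) v 0 := by
    simpa using ((hasDerivAt_id (0:ℝ)).smul_const v).const_add y
  have := (h1.inner ℝ (hasDerivAt_const 0 v)).const_mul (-2)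
  refine this.congr_deriv ?_
  simp

/-- first and second order conditions along a line for the auxiliary function -/
lemma aux_line {n : ℕ} {u : Euc n → ℝ} {x z e : Euc n} (hu : ContDiffAt ℝ 3 u x) (R N G : ℝ)
    (hm : IsLocalMax (fun y => (R ^ 2 - ‖y - z‖ ^ 2) * fderiv ℝ u y e -
      G * (16 * N ^ 2 - (u y + 2 * N) ^ 2)) x) (v : Euc n) :
    (-2 * inner ℝ (x - z) v * fderiv ℝ u x e +
      (R ^ 2 - ‖x - z‖ ^ 2) * fderiv ℝ (fderiv ℝ u) x v e
      - G * (-(2 * (u x + 2 * N) * fderiv ℝ u x v)) = 0) ∧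
    (-2 * ‖v‖ ^ 2 * fderiv ℝ u x e + 2 * (-2 * inner ℝ (x - z) v) * fderiv ℝ (fderiv ℝ u) x v e
      + (R ^ 2 - ‖x - z‖ ^ 2) * fderiv ℝ (fderiv ℝ (fderiv ℝ u)) x v v e
      - G * (-(2 * (fderiv ℝ u x v) ^ 2 +
          2 * (u x + 2 * N) * fderiv ℝ (fderiv ℝ u) x v v)) ≤ 0) := by
  have hu2 : ContDiffAt ℝ 2 u x := hu.of_le (by norm_num)
  have hev : ∀ᶠ s : ℝ in 𝓝 0, ContDiffAt ℝ 3 u (x + s • v) :=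
    (line_tendsto x v).eventually (ev2 hu)
  have hd : ∀ᶠ s : ℝ in 𝓝 0, HasDerivAt (fun s : ℝ => fderiv ℝ u (x + s • v) e)
      (fderiv ℝ (fderiv ℝ u) (x + s • v) v e) s := by
    filter_upwards [hev] with s hs
    have hdd : DifferentiableAt ℝ (fderiv ℝ u) (x + s • v) :=
      (hs.fderiv_right (m := 1) (by norm_num)).differentiableAt (by simp)
    simpa using (line_deriv hdd).clm_apply (hasDerivAt_const s e)
  have hsub : ∀ s : ℝ, x + s • v - z = (x - z) + s • v := fun s => by abel
  have hm' := line_max hm v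
  simp only [hsub] at hm'
  have key := max_1d (g1 := fun s : ℝ => (-2 * inner ℝ ((x - z) + s • v) v) *
      fderiv ℝ u (x + s • v) e + (R ^ 2 - ‖(x - z) + s • v‖ ^ 2) *
        fderiv ℝ (fderiv ℝ u) (x + s • v) v e
      - G * (-(2 * (u (x + s • v) + 2 * N) * fderiv ℝ u (x + s • v) v)))
    (g2 := (-2 * ‖v‖ ^ 2 * fderiv ℝ u x e + 2 * (-2 * inner ℝ (x - z) v) *
        fderiv ℝ (fderiv ℝ u) x v e
      + (R ^ 2 - ‖x - z‖ ^ 2) * fderiv ℝ (fderiv ℝ (fderiv ℝ u)) x v v e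
      - G * (-(2 * (fderiv ℝ u x v) ^ 2 +
          2 * (u x + 2 * N) * fderiv ℝ (fderiv ℝ u) x v v)))) ?_ ?_ hm'
  · simpa using key
  · filter_upwards [hd, line_d1 hu2 v] with s h1 h2
    have := ((rho_line (x - z) v R s).fun_mul h1).fun_sub
      ((((h2.add_const (2 * N)).fun_pow 2).const_sub (16 * N ^ 2)).const_mul G)
    refine this.congr_deriv ?_
    simp
  · have h2 := (line_d1 hu2 v).self_of_nhds
    have h1 := hd.self_of_nhds
    have := (((rho_line2 (x - z) v).fun_mul h1).fun_add
      ((rho_line (x - z) v R 0).fun_mul (d3_line hu v v e))).fun_sub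
      (((((h2.add_const (2 * N)).const_mul 2).fun_mul (line_d2 hu2 v v)).fun_neg).const_mul G)
    refine this.congr_deriv ?_
    simp
    ring

lemma grad_alg {G f' u1 ip iv nv R N rho Y Xv Xe : ℝ} {α β : ℝ}
    (hrho : 0 < rho) (hrR : rho ≤ R ^ 2) (hu1 : 0 < u1) (hR : 0 < R) (hN : 0 < N) (hG : 0 ≤ G)
    (hnv : 0 ≤ nv) (hip : |ip| ≤ R * nv) (hiv : |iv| ≤ nv) (hf : |f'| ≤ 6 * N)
    (h1 : -2 * ip * u1 + rho * Xe - G * (f' * (u1 * iv)) = 0)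
    (h2 : -2 * nv ^ 2 * u1 + 2 * (-2 * ip) * Xe + rho * Y -
      G * (-2 * (u1 * iv) ^ 2 + f' * Xv) ≤ 0)
    (hα : α = 2 * rho * G * u1 ^ 2) (hβ : β = u1 * (10 * R ^ 2 + 24 * N * R * G)) :
    rho ^ 2 * Y ≤ rho * G * f' * Xv - α * iv ^ 2 + β * nv ^ 2 := by
  have h3 : rho * Xe = 2 * ip * u1 + G * (f' * (u1 * iv)) := by linarith
  have h4 := mul_le_mul_of_nonneg_left h2 hrho.le
  have h5 : ip ^ 2 ≤ R ^ 2 * nv ^ 2 := by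
    rw [← mul_pow, ← sq_abs ip]; gcongr
  have h6 : ip * (f' * iv) ≤ 6 * N * R * nv ^ 2 := by
    have : |ip * (f' * iv)| ≤ (R * nv) * ((6 * N) * nv) := by
      rw [abs_mul, abs_mul]; gcongr
    have h7 := le_abs_self (ip * (f' * iv))
    linarith
  have h7 : rho * nv ^ 2 ≤ R ^ 2 * nv ^ 2 := by gcongr
  have e1 : rho * (2 * (-2 * ip) * Xe) = -4 * ip * (2 * ip * u1 + G * (f' * (u1 * iv))) := by
    rw [← h3]; ring
  have h8 := mul_le_mul_of_nonneg_left h5 hu1.le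
  have h9 := mul_le_mul_of_nonneg_left h6 (mul_nonneg hG hu1.le)
  have h10 := mul_le_mul_of_nonneg_left h7 hu1.le
  rw [hα, hβ]
  have e2 : rho * (-2 * nv ^ 2 * u1 + 2 * (-2 * ip) * Xe + rho * Y -
      G * (-2 * (u1 * iv) ^ 2 + f' * Xv)) = -2 * (u1 * (rho * nv ^ 2)) +
      rho * (2 * (-2 * ip) * Xe) + rho ^ 2 * Y + 2 * rho * G * u1 ^ 2 * iv ^ 2
      - rho * G * f' * Xv := by ring
  rw [e2, e1] at h4
  nlinarith

set_option maxHeartbeats 2000000 in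
theorem grad_est {n k : ℕ} (hk1 : 1 ≤ k) (hkn : k ≤ n) {u : Euc n → ℝ} {z : Euc n} {R N : ℝ}
    (hR : 0 < R) (hN : 0 < N) (hu : ∀ x ∈ Metric.closedBall z R, ContDiffAt ℝ 3 u x)
    (hG : ∀ x ∈ Metric.ball z R, MG n k (hessMat n u x))
    (h1 : ∀ x ∈ Metric.ball z R, matSk n k (hessMat n u x) = 1)
    (hb : ∀ x ∈ Metric.closedBall z R, |u x| ≤ N) :
    ‖fderiv ℝ u z‖ ≤ 45 * n * N / R := by
  set f : Euc n → ℝ := fun x => 16 * N ^ 2 - (u x + 2 * N) ^ 2 with hf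
  have hf7 : ∀ x ∈ Metric.closedBall z R, 7 * N ^ 2 ≤ f x := by
    intro x hx
    have := abs_le.1 (hb x hx)
    simp only [hf]
    nlinarith
  have hf15 : ∀ x ∈ Metric.closedBall z R, f x ≤ 15 * N ^ 2 := by
    intro x hx
    have := abs_le.1 (hb x hx)
    simp only [hf]
    nlinarith
  have hfp : ∀ x ∈ Metric.closedBall z R, 0 < f x := fun x hx =>
    lt_of_lt_of_le (by positivity) (hf7 x hx)
  have hzz : z ∈ Metric.closedBall z R := Metric.mem_closedBall_self hR.le
  have hDc : ∀ x ∈ Metric.closedBall z R, ContinuousAt (fderiv ℝ u) x := fun x hx =>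
    ((hu x hx).fderiv_right (m := 2) (by norm_num)).continuousAt
  obtain ⟨x, hx, hmax⟩ := (isCompact_closedBall z R).exists_isMaxOn ⟨z, hzz⟩
    (f := fun x => (R ^ 2 - ‖x - z‖ ^ 2) * ‖fderiv ℝ u x‖ / f x) (by
      intro x hx
      apply ContinuousAt.continuousWithinAt
      have h2 := (hu x hx).continuousAt
      have h3 := hDc x hx
      have h4 := (hfp x hx).ne'
      simp only [hf] at h4 ⊢
      fun_prop (disch := assumption))
  set G := (R ^ 2 - ‖x - z‖ ^ 2) * ‖fderiv ℝ u x‖ / f x with hGd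
  have hGz : R ^ 2 * ‖fderiv ℝ u z‖ ≤ G * (15 * N ^ 2) := by
    have h2 : (R ^ 2 - ‖z - z‖ ^ 2) * ‖fderiv ℝ u z‖ / f z ≤ G := hmax hzz
    rw [div_le_iff₀ (hfp z hzz)] at h2
    simp only [sub_self, norm_zero] at h2
    have h3 : 0 ≤ G := by
      have h5 : ‖x - z‖ ≤ R := by simpa [dist_eq_norm] using hx
      have h6 : 0 ≤ R ^ 2 - ‖x - z‖ ^ 2 := by
        have := norm_nonneg (x - z)
        nlinarith
      have := hfp x hx
      positivity
    have h4 := mul_le_mul_of_nonneg_left (hf15 z hzz) h3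
    nlinarith
  have hn1 : (1 : ℝ) ≤ n := by exact_mod_cast hk1.trans hkn
  suffices hs : N * G < 3 * n * R by
    rw [le_div_iff₀ hR]
    have h2 : R * (‖fderiv ℝ u z‖ * R) ≤ R * (45 * n * N) := by nlinarith
    exact le_of_mul_le_mul_left h2 hR
  by_contra hcon
  push Not at hcon
  have hGpos : 0 < G := by
    have : 0 < N * G := lt_of_lt_of_le (by positivity) hcon
    exact (pos_iff_pos_of_mul_pos this).1 hN
  have hxR : ‖x - z‖ ≤ R := by simpa [dist_eq_norm] using hx
  set rho := R ^ 2 - ‖x - z‖ ^ 2 with hrho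
  set u1 := ‖fderiv ℝ u x‖ with hu1d
  have hGf : rho * u1 = G * f x := by
    rw [hGd, div_mul_cancel₀ _ (hfp x hx).ne']
  have hprod : 0 < rho * u1 := by rw [hGf]; exact mul_pos hGpos (hfp x hx)
  have hu1 : 0 < u1 := by
    rcases (norm_nonneg (fderiv ℝ u x)).eq_or_lt with h | h
    · rw [hu1d, ← h, mul_zero] at hprod; exact absurd hprod (lt_irrefl _)
    · exact h
  have hrho0 : 0 < rho := pos_of_mul_pos_left hprod hu1.le
  have hxb : x ∈ Metric.ball z R := by
    rw [Metric.mem_ball, dist_eq_norm]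
    refine lt_of_le_of_ne hxR fun h => ?_
    rw [hrho, h] at hrho0
    simp at hrho0
  have hrR : rho ≤ R ^ 2 := by rw [hrho]; nlinarith [norm_nonneg (x - z)]
  -- the unit gradient direction
  set w := (InnerProductSpace.toDual ℝ (Euc n)).symm (fderiv ℝ u x) with hw
  have hwn : ‖w‖ = u1 := by rw [hw, LinearIsometryEquiv.norm_map]
  have hwi : ∀ v, fderiv ℝ u x v = inner ℝ w v := by
    intro v
    rw [hw, InnerProductSpace.toDual_symm_apply]
  set e := u1⁻¹ • w with he
  have hen : ‖e‖ = 1 := by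
    rw [he, norm_smul, hwn, norm_inv, Real.norm_of_nonneg hu1.le, inv_mul_cancel₀ hu1.ne']
  have hDv : ∀ v, fderiv ℝ u x v = u1 * inner ℝ e v := by
    intro v
    rw [hwi, he, real_inner_smul_left, mul_inv_cancel_left₀ hu1.ne']
  have hee : inner ℝ e e = (1 : ℝ) := by rw [real_inner_self_eq_norm_sq, hen]; norm_num
  have hDe : fderiv ℝ u x e = u1 := by rw [hDv, hee, mul_one]
  have hm : IsLocalMax (fun y => (R ^ 2 - ‖y - z‖ ^ 2) * fderiv ℝ u y e -
      G * (16 * N ^ 2 - (u y + 2 * N) ^ 2)) x := by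
    filter_upwards [Metric.isOpen_ball.mem_nhds hxb] with y hy
    have hyc := Metric.ball_subset_closedBall hy
    have h2 : (R ^ 2 - ‖y - z‖ ^ 2) * ‖fderiv ℝ u y‖ / f y ≤ G := hmax hyc
    rw [div_le_iff₀ (hfp y hyc)] at h2
    have h3 : fderiv ℝ u y e ≤ ‖fderiv ℝ u y‖ := by
      have := (le_abs_self _).trans ((fderiv ℝ u y).le_opNorm e)
      rwa [hen, mul_one] at this
    have h5 : ‖y - z‖ ≤ R := by simpa [dist_eq_norm] using hyc
    have h6 : 0 ≤ R ^ 2 - ‖y - z‖ ^ 2 := by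
      have := norm_nonneg (y - z)
      nlinarith
    have h7 := mul_le_mul_of_nonneg_left h3 h6
    rw [hDe]
    have h8 : rho * u1 - G * f x = 0 := by linarith
    simp only [hf] at h2 h8
    linarith
  have hux := hu x hx
  have hline := aux_line hux R N G hm
  set f' := -(2 * (u x + 2 * N)) with hf'
  have hub := abs_le.1 (hb x hx)
  have hf'1 : |f'| ≤ 6 * N := by rw [abs_le, hf']; constructor <;> linarith
  have hf'2 : f' ≤ -(2 * N) := by rw [hf']; linarith
  have hsc : ContDiffAt ℝ 2 u x := hux.of_le (by norm_num)
  obtain ⟨m, rfl⟩ : ∃ m, k = m + 1 := ⟨k - 1, by omega⟩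
  have hYdef : ∃ Y : Matrix (Fin n) (Fin n) ℝ, ∀ i j, Y i j =
      ((rho ^ 2) • fderiv ℝ (fderiv ℝ (fderiv ℝ u)) x e) (ebasis n i) (ebasis n j) :=
    ⟨Matrix.of fun i j => _, fun i j => rfl⟩
  obtain ⟨Y, hY⟩ := hYdef
  have hyn : ‖x - z‖ ≤ R := hxR
  refine grad_core (n := n) (m := m) hkn (hessMat n u x) Y (hess_symm hsc) (hG x hxb) (h1 x hxb)
    ?_ e.ofLp (by rw [dot_inner, hee]) ?_ (rho * G * f') (2 * rho * G * u1 ^ 2)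
    (u1 * (10 * R ^ 2 + 24 * N * R * G)) ?_ (by positivity) ?_ ?_
    (fun t => hessMat n u (x + t • (rho ^ 2 • e))) (by simp) ?_ ?_
  · ext i j
    rw [Matrix.transpose_apply, hY, hY, smul_apply, smul_apply, smul_apply, smul_apply,
      d3_swap23 hux]
  · rw [hess_quad]
    have h2 := (hline e).1
    rw [hDe] at h2
    have h3 : |inner ℝ (x - z) e| ≤ R := by
      have := abs_real_inner_le_norm (x - z) e
      rw [hen, mul_one] at this
      exact this.trans hyn
    have h4 := abs_le.1 h3
    have h5 : rho * fderiv ℝ (fderiv ℝ u) x e e = u1 * (2 * inner ℝ (x - z) e + G * f') := by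
      rw [hf']; linarith
    have h6 : 2 * inner ℝ (x - z) e + G * f' ≤ 0 := by
      have : G * f' ≤ G * (-(2 * N)) := mul_le_mul_of_nonneg_left hf'2 hGpos.le
      nlinarith
    have h7 : rho * fderiv ℝ (fderiv ℝ u) x e e ≤ 0 := by
      rw [h5]; exact mul_nonpos_of_nonneg_of_nonpos hu1.le h6
    exact nonpos_of_mul_nonpos_right h7 hrho0
  · exact mul_nonpos_of_nonneg_of_nonpos (by positivity) (by linarith)
  · have h2 : 2 * rho * G * u1 ^ 2 = u1 * (2 * G ^ 2 * f x) := by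
      have : 2 * rho * G * u1 ^ 2 = 2 * G * u1 * (rho * u1) := by ring
      rw [this, hGf]; ring
    rw [h2]
    have h3 : (n : ℝ) * (10 * R ^ 2 + 24 * N * R * G) < 2 * G ^ 2 * f x := by
      have h4 := mul_le_mul_of_nonneg_left (hf7 x hx) (by positivity : 0 ≤ 2 * G ^ 2)
      refine lt_of_lt_of_le ?_ h4
      set s := N * G with hs
      have hs0 : 0 < s := by positivity
      have e1 : 2 * G ^ 2 * (7 * N ^ 2) = 14 * s ^ 2 := by rw [hs]; ring
      have e2 : (n : ℝ) * (10 * R ^ 2 + 24 * N * R * G) = 10 * (n * R) * R + 24 * (n * R) * s := by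
        rw [hs]; ring
      rw [e1, e2]
      have h5 : n * R ≤ s / 3 := by linarith
      have h6 : R ≤ s / 3 := by nlinarith
      have h7 : 0 ≤ n * R := by positivity
      have h8 : (n * R) * R ≤ (s / 3) * (s / 3) := mul_le_mul h5 h6 hR.le (by positivity)
      have h9 : (n * R) * s ≤ (s / 3) * s := mul_le_mul_of_nonneg_right h5 hs0.le
      nlinarith
    calc _ = u1 * (n * (10 * R ^ 2 + 24 * N * R * G)) := by ring
      _ < _ := mul_lt_mul_of_pos_left h3 hu1
  · intro v'
    set v : Euc n := WithLp.toLp 2 v' with hv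
    have hv' : v' = v.ofLp := rfl
    rw [hv', bil_quad _ Y hY, hess_quad, dot_inner, dot_inner, real_inner_self_eq_norm_sq]
    have h2 := (hline v).1
    have h3 := (hline v).2
    rw [hDe, hDv v] at h2 h3
    rw [d3_swap23 hux, d3_swap12 hux] at h3
    rw [smul_apply, smul_apply, smul_eq_mul]
    refine grad_alg (Xe := fderiv ℝ (fderiv ℝ u) x v e) (ip := inner ℝ (x - z) v) (N := N) (R := R)
      hrho0 hrR hu1 hR hN hGpos.le (norm_nonneg v) ?_ ?_ hf'1 ?_ ?_ rfl rfl
    · exact (abs_real_inner_le_norm _ _).trans (by gcongr)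
    · have := abs_real_inner_le_norm e v
      rwa [hen, one_mul] at this
    · rw [← h2, hf']; ring
    · refine le_trans (le_of_eq ?_) h3
      rw [hf']; ring
  · intro i j
    simp only [hess_apply]
    have := d3_line hux (rho ^ 2 • e) (ebasis n i) (ebasis n j)
    refine this.congr_deriv ?_
    rw [hY, map_smul]
  · filter_upwards [(line_tendsto x (rho ^ 2 • e)).eventually
      (Metric.isOpen_ball.mem_nhds hxb)] with t ht using h1 _ ht

lemma arsinh_inv_tendsto (C : ℝ) :
    Tendsto (fun ε : ℝ => C / Real.arsinh ε⁻¹) (𝓝[>] (0 : ℝ)) (𝓝 0) := by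
  have h1 : Tendsto (fun ε : ℝ => Real.arsinh ε⁻¹) (𝓝[>] (0 : ℝ)) atTop := by
    have : Tendsto Real.arsinh atTop atTop := Real.sinhOrderIso.symm.tendsto_atTop
    exact this.comp tendsto_inv_nhdsGT_zero
  exact h1.const_div_atTop C

lemma key_est (n k : ℕ) (hn : 3 ≤ n) (hk1 : 1 ≤ k) (hkn : 2 * k ≤ n)
    (a : Fin n → ℝ) (ha : ∀ i, 0 < a i) (hA : matSk n k (Matrix.diagonal a) = 1)
    (x₀ : Euc n) (c : ℝ) (hc : 0 < c) (u : ℝ → Euc n → ℝ)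
    (hu : ∀ ε : ℝ, 0 < ε → ε < 1 / 2 → ExtBallSol n k a x₀ ε c (u ε)) :
    ∃ C : ℝ, 0 < C ∧ ∀ᶠ ε in 𝓝[>] (0 : ℝ), 0 < ε ∧ ExtBallSol n k a x₀ ε c (u ε) ∧
      ∀ x ∈ (Metric.ball x₀ ε)ᶜ, |u ε x - (quadA n (Matrix.diagonal a) x + c)| ≤
        C / Real.arsinh ε⁻¹ * Real.arsinh (‖x - x₀‖⁻¹) := by
  obtain ⟨Q, hQ⟩ := (isCompact_closedBall x₀ (1 : ℝ)).exists_bound_of_continuousOn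
    (quadA_contDiff a).continuous.continuousOn
  have hQ0 : 0 ≤ Q := (norm_nonneg _).trans (hQ x₀ (by simp))
  refine ⟨Q + c, by linarith, ?_⟩
  have hev : ∀ᶠ ε in 𝓝[>] (0 : ℝ), ∀ i, (Q + c) / Real.arsinh ε⁻¹ ≤ a i := by
    rw [Filter.eventually_all]
    intro i
    exact ((arsinh_inv_tendsto (Q + c)).eventually (gt_mem_nhds (ha i))).mono fun ε h => le_of_lt h
  filter_upwards [hev, Ioo_mem_nhdsGT (show (0:ℝ) < 1 / 2 by norm_num)] with ε h1 h2
  have hs := hu ε h2.1 h2.2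
  refine ⟨h2.1, hs, fun x hx => ?_⟩
  have hup := upper_bd hk1 (by omega) ha hA h2.1 hc hs hx
  have hlo := lower_bd hn hk1 hkn ha hA h2.1 hs (C := Q + c) ?_ (by linarith) h1 hx
  · rw [abs_le]
    have h3 : 0 ≤ (Q + c) / Real.arsinh ε⁻¹ * Real.arsinh (‖x - x₀‖⁻¹) := by
      have := Real.arsinh_pos_iff.2 (inv_pos.2 h2.1)
      exact mul_nonneg (div_nonneg (by linarith) this.le)
        (Real.arsinh_nonneg_iff.2 (by positivity))
    constructor <;> linarith
  · intro y hy
    have := hQ y (by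
      rw [mem_sphere_iff_norm] at hy
      rw [mem_closedBall_iff_norm, hy]; linarith [h2.2])
    rw [Real.norm_eq_abs] at this
    linarith [le_abs_self (quadA n (Matrix.diagonal a) y)]

lemma ext_of_not {n : ℕ} {x₀ x : Euc n} {ε : ℝ} {v : Euc n → ℝ} (hx : x ∈ (Metric.ball x₀ ε)ᶜ) :
    extBy n (Metric.ball x₀ ε) 0 v x = v x := by
  unfold extBy
  rw [if_neg hx]

lemma bound_C {n : ℕ} {x₀ x : Euc n} {ε C : ℝ} (hC : 0 < C) (hε : 0 < ε)
    (hx : x ∈ (Metric.ball x₀ ε)ᶜ) :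
    C / Real.arsinh ε⁻¹ * Real.arsinh (‖x - x₀‖⁻¹) ≤ C := by
  have h1 := Real.arsinh_pos_iff.2 (inv_pos.2 hε)
  have h2 : ε ≤ ‖x - x₀‖ := by
    simpa [dist_eq_norm] using hx
  have h3 : Real.arsinh (‖x - x₀‖⁻¹) ≤ Real.arsinh ε⁻¹ := by
    rw [Real.arsinh_le_arsinh]
    gcongr
  calc _ ≤ C / Real.arsinh ε⁻¹ * Real.arsinh ε⁻¹ := by gcongr
    _ = C := div_mul_cancel₀ _ h1.ne'

lemma L1_part {n k : ℕ} {a : Fin n → ℝ} {x₀ : Euc n} (hx₀ : x₀ ≠ 0) {c C : ℝ} (hC : 0 < C)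
    {u : ℝ → Euc n → ℝ}
    (hkey : ∀ᶠ ε in 𝓝[>] (0 : ℝ), 0 < ε ∧ ExtBallSol n k a x₀ ε c (u ε) ∧
      ∀ x ∈ (Metric.ball x₀ ε)ᶜ, |u ε x - (quadA n (Matrix.diagonal a) x + c)| ≤
        C / Real.arsinh ε⁻¹ * Real.arsinh (‖x - x₀‖⁻¹))
    (K : Set (Euc n)) (hK : IsCompact K) :
    Tendsto (fun ε : ℝ => ∫ x in K,
              |extBy n (Metric.ball x₀ ε) 0 (u ε) x -
                (quadA n (Matrix.diagonal a) x + c)|)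
            (𝓝[>] (0 : ℝ)) (𝓝 0) := by
  haveI : Nontrivial (Euc n) := ⟨⟨x₀, 0, hx₀⟩⟩
  have hpc : Continuous (fun x : Euc n => quadA n (Matrix.diagonal a) x + c) :=
    (quadA_contDiff a).continuous.add_const c
  obtain ⟨Q, hQ⟩ := hK.exists_bound_of_continuousOn hpc.continuousOn
  have : Tendsto (fun ε : ℝ => ∫ x in K,
              |extBy n (Metric.ball x₀ ε) 0 (u ε) x -
                (quadA n (Matrix.diagonal a) x + c)|)
            (𝓝[>] (0 : ℝ)) (𝓝 (∫ x in K, (0 : ℝ))) := by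
    refine tendsto_integral_filter_of_dominated_convergence (fun _ => C + Q) ?_ ?_ ?_ ?_
    · filter_upwards [hkey] with ε h
      have hm : Measurable (extBy n (Metric.ball x₀ ε) 0 (u ε)) := by
        have := ContinuousOn.measurable_piecewise (s := Metric.ball x₀ ε)
          (f := fun _ => (0:ℝ)) (g := u ε) continuousOn_const (sol_cont h.2.1)
          measurableSet_ball
        exact this
      have h2 : Measurable (fun x => |extBy n (Metric.ball x₀ ε) 0 (u ε) x -
                (quadA n (Matrix.diagonal a) x + c)|) := by
        simpa [Real.norm_eq_abs] using (hm.sub hpc.measurable).norm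
      exact h2.aestronglyMeasurable
    · filter_upwards [hkey] with ε h
      filter_upwards [ae_restrict_mem hK.measurableSet] with x hx
      have hq := hQ x hx
      rw [Real.norm_eq_abs] at hq ⊢
      rw [abs_abs]
      by_cases hb : x ∈ Metric.ball x₀ ε
      · unfold extBy
        rw [if_pos hb, zero_sub, abs_neg]
        linarith
      · rw [ext_of_not hb]
        have := (h.2.2 x hb).trans (bound_C hC h.1 hb)
        linarith [abs_nonneg (quadA n (Matrix.diagonal a) x + c)]
    · exact integrableOn_const hK.measure_lt_top.ne
    · refine ae_restrict_of_ae ?_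
      have hne : ∀ᵐ x : Euc n, x ≠ x₀ := by
        simp [ae_iff, measure_singleton]
      filter_upwards [hne] with x hx
      have hpos : 0 < ‖x - x₀‖ := norm_pos_iff.2 (sub_ne_zero.2 hx)
      have ht : Tendsto (fun ε : ℝ => C / Real.arsinh ε⁻¹ * Real.arsinh (‖x - x₀‖⁻¹))
          (𝓝[>] (0 : ℝ)) (𝓝 0) := by
        simpa using (arsinh_inv_tendsto C).mul_const (Real.arsinh (‖x - x₀‖⁻¹))
      refine squeeze_zero' (Eventually.of_forall fun ε => abs_nonneg _) ?_ ht
      filter_upwards [hkey, Ioo_mem_nhdsGT hpos] with ε h h2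
      have hb : x ∈ (Metric.ball x₀ ε)ᶜ := by
        simpa [dist_eq_norm] using h2.2.le
      rw [ext_of_not hb]
      exact h.2.2 x hb
  simpa using this

lemma away {n : ℕ} {x₀ : Euc n} {K : Set (Euc n)} (hK : IsCompact K) (hK0 : K ⊆ {x₀}ᶜ) :
    ∃ r : ℝ, 0 < r ∧ ∀ x ∈ K, r ≤ ‖x - x₀‖ := by
  have : Kᶜ ∈ 𝓝 x₀ := hK.isClosed.isOpen_compl.mem_nhds fun h => hK0 h rfl
  obtain ⟨r, hr, hb⟩ := Metric.mem_nhds_iff.1 this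
  refine ⟨r, hr, fun x hx => ?_⟩
  by_contra hcon
  push Not at hcon
  exact hb (show x ∈ Metric.ball x₀ r by rwa [Metric.mem_ball, dist_eq_norm]) hx

lemma unif_est {n k : ℕ} {a : Fin n → ℝ} {x₀ : Euc n} {c C : ℝ} (hC : 0 < C)
    {u : ℝ → Euc n → ℝ}
    (hkey : ∀ᶠ ε in 𝓝[>] (0 : ℝ), 0 < ε ∧ ExtBallSol n k a x₀ ε c (u ε) ∧
      ∀ x ∈ (Metric.ball x₀ ε)ᶜ, |u ε x - (quadA n (Matrix.diagonal a) x + c)| ≤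
        C / Real.arsinh ε⁻¹ * Real.arsinh (‖x - x₀‖⁻¹))
    {K : Set (Euc n)} {r : ℝ} (hr : 0 < r) (hK : ∀ x ∈ K, r ≤ ‖x - x₀‖) :
    ∀ᶠ ε in 𝓝[>] (0 : ℝ), ∀ x ∈ K, |extBy n (Metric.ball x₀ ε) 0 (u ε) x -
                (quadA n (Matrix.diagonal a) x + c)| ≤ C / Real.arsinh ε⁻¹ * Real.arsinh r⁻¹ := by
  filter_upwards [hkey, Ioo_mem_nhdsGT hr] with ε h h2 x hx
  have hb : x ∈ (Metric.ball x₀ ε)ᶜ := by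
    simpa [dist_eq_norm] using h2.2.le.trans (hK x hx)
  rw [ext_of_not hb]
  refine (h.2.2 x hb).trans ?_
  have h1 := Real.arsinh_pos_iff.2 (inv_pos.2 h.1)
  have h3 : Real.arsinh (‖x - x₀‖⁻¹) ≤ Real.arsinh r⁻¹ := by
    rw [Real.arsinh_le_arsinh]
    have := hK x hx
    gcongr
  gcongr

lemma lip_est {n k : ℕ} (hk1 : 1 ≤ k) (hkn : k ≤ n) {a : Fin n → ℝ} {x₀ : Euc n} {c C : ℝ}
    (hC : 0 < C) {u : ℝ → Euc n → ℝ}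
    (hkey : ∀ᶠ ε in 𝓝[>] (0 : ℝ), 0 < ε ∧ ExtBallSol n k a x₀ ε c (u ε) ∧
      ∀ x ∈ (Metric.ball x₀ ε)ᶜ, |u ε x - (quadA n (Matrix.diagonal a) x + c)| ≤
        C / Real.arsinh ε⁻¹ * Real.arsinh (‖x - x₀‖⁻¹))
    {K : Set (Euc n)} (hKc : IsCompact K) {r : ℝ} (hr : 0 < r) (hK : ∀ x ∈ K, r ≤ ‖x - x₀‖) :
    ∃ L : ℝ, 0 < L ∧ ∀ᶠ ε in 𝓝[>] (0 : ℝ), ∀ x ∈ K, ∀ y ∈ K, ‖x - y‖ < r / 4 →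
      |(extBy n (Metric.ball x₀ ε) 0 (u ε) x - (quadA n (Matrix.diagonal a) x + c)) -
        (extBy n (Metric.ball x₀ ε) 0 (u ε) y - (quadA n (Matrix.diagonal a) y + c))|
        ≤ L * ‖x - y‖ := by
  have hpc : ContDiff ℝ 2 (fun x : Euc n => quadA n (Matrix.diagonal a) x + c) :=
    (quadA_contDiff a).add contDiff_const
  set p : Euc n → ℝ := fun x => quadA n (Matrix.diagonal a) x + c with hp
  obtain ⟨B, hB⟩ := hKc.isBounded.exists_norm_le
  obtain ⟨Q, hQ⟩ := (isCompact_closedBall (0 : Euc n) (B + r)).exists_bound_of_continuousOn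
    hpc.continuous.continuousOn
  obtain ⟨L2, hL2⟩ := (isCompact_closedBall (0 : Euc n) (B + r)).exists_bound_of_continuousOn
    (hpc.continuous_fderiv (by norm_num)).continuousOn
  set N := |Q| + C with hN
  have hN0 : 0 < N := by positivity
  have hn0 : (0 : ℝ) < n := by exact_mod_cast (by omega : 0 < n)
  refine ⟨45 * n * N / (r / 4) + |L2|, by positivity, ?_⟩
  filter_upwards [hkey, Ioo_mem_nhdsGT (show 0 < r / 4 by linarith)] with ε h h2 x hx y hy hxy
  have hbig : ∀ w ∈ Metric.ball x (r / 4), w ∈ Metric.closedBall (0 : Euc n) (B + r) := by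
    intro w hw
    rw [mem_ball_iff_norm] at hw
    rw [mem_closedBall_zero_iff]
    have h3 : ‖w‖ ≤ ‖w - x‖ + ‖x‖ := by simpa using norm_add_le (w - x) x
    linarith [hB x hx]
  have hgu : ∀ w ∈ Metric.ball x (r / 4), ‖fderiv ℝ (u ε) w‖ ≤ 45 * n * N / (r / 4) := by
    intro w hw
    rw [mem_ball_iff_norm] at hw
    have hfar : ∀ q ∈ Metric.closedBall w (r / 4), ε < ‖q - x₀‖ := by
      intro q hq
      rw [mem_closedBall_iff_norm] at hq
      have h3 : ‖x - x₀‖ ≤ ‖w - x‖ + ‖q - w‖ + ‖q - x₀‖ := by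
        have e : x - x₀ = -(w - x) + (-(q - w)) + (q - x₀) := by abel
        rw [e]
        refine (norm_add₃_le).trans ?_
        rw [norm_neg, norm_neg]
      linarith [hK x hx, h2.2]
    have hfar1 : ∀ q ∈ Metric.closedBall w (r / 4), q ∈ (Metric.ball x₀ ε)ᶜ := by
      intro q hq
      simpa [dist_eq_norm] using (hfar q hq).le
    have hfar2 : ∀ q ∈ Metric.ball w (r / 4), q ∈ (closure (Metric.ball x₀ ε))ᶜ := by
      intro q hq hq2
      have h4 := Metric.closure_ball_subset_closedBall hq2
      rw [mem_closedBall_iff_norm] at h4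
      linarith [hfar q (Metric.ball_subset_closedBall hq)]
    refine grad_est hk1 hkn (by linarith) hN0 ?_ ?_ ?_ ?_
    · intro q hq
      exact (sol_contDiffAt h.2.1 (hfar1 q hq)).of_le
        (WithTop.coe_le_coe.2 (le_top : (3 : ℕ∞) ≤ ⊤))
    · intro q hq
      exact h.2.1.2.1 q (hfar2 q hq)
    · intro q hq
      exact h.2.1.2.2.1 q (hfar2 q hq)
    · intro q hq
      have h3 := (h.2.2 q (hfar1 q hq)).trans (bound_C hC h.1 (hfar1 q hq))
      have h4 : ‖q‖ ≤ B + r := by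
        rw [mem_closedBall_iff_norm] at hq
        have e : q = (q - w) + (w - x) + x := by abel
        have := norm_add₃_le (a := q - w) (b := w - x) (c := x)
        rw [← e] at this
        linarith [hB x hx]
      have h5 := hQ q (by rwa [mem_closedBall_zero_iff])
      rw [Real.norm_eq_abs] at h5
      have h6 : |u ε q| ≤ |u ε q - p q| + |p q| := by
        simpa using abs_add_le (u ε q - p q) (p q)
      have h7 := le_abs_self Q
      simp only [hp] at h5 h6
      rw [hN]
      linarith
  have hdiff : ∀ w ∈ Metric.ball x (r / 4), DifferentiableAt ℝ (u ε) w := by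
    intro w hw
    rw [mem_ball_iff_norm] at hw
    have : w ∈ (Metric.ball x₀ ε)ᶜ := by
      have h3 : ‖x - x₀‖ ≤ ‖w - x‖ + ‖w - x₀‖ := by
        have e : x - x₀ = -(w - x) + (w - x₀) := by abel
        rw [e]
        refine (norm_add_le _ _).trans ?_
        rw [norm_neg]
      have h4 : ε ≤ ‖w - x₀‖ := by linarith [hK x hx, h2.2]
      simpa [dist_eq_norm] using h4
    exact (sol_contDiffAt h.2.1 this).differentiableAt (by simp)
  have hyb : y ∈ Metric.ball x (r / 4) := by rwa [mem_ball_iff_norm, norm_sub_rev]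
  have hxb : x ∈ Metric.ball x (r / 4) := Metric.mem_ball_self (by linarith)
  have e1 := (convex_ball x (r / 4)).norm_image_sub_le_of_norm_fderiv_le hdiff hgu hyb hxb
  have e2 := (convex_ball x (r / 4)).norm_image_sub_le_of_norm_fderiv_le (f := p)
    (fun w _ => (hpc.differentiable (by norm_num)).differentiableAt)
    (fun w hw => (hL2 w (hbig w hw)).trans (le_abs_self L2)) hyb hxb
  have hbx : x ∈ (Metric.ball x₀ ε)ᶜ := by
    simpa [dist_eq_norm] using (by linarith [hK x hx, h2.2] : ε ≤ ‖x - x₀‖)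
  have hby : y ∈ (Metric.ball x₀ ε)ᶜ := by
    simpa [dist_eq_norm] using (by linarith [hK y hy, h2.2] : ε ≤ ‖y - x₀‖)
  rw [ext_of_not hbx, ext_of_not hby]
  rw [Real.norm_eq_abs] at e1 e2
  have e3 : |(u ε x - p x) - (u ε y - p y)| ≤ |u ε x - u ε y| + |p x - p y| := by
    have e : (u ε x - p x) - (u ε y - p y) = (u ε x - u ε y) - (p x - p y) := by ring
    rw [e]
    exact abs_sub _ _
  simp only [hp] at e2 e3
  rw [add_mul]
  linarith

lemma holder_alg {D d L H γ ρ : ℝ} (hD : 0 ≤ D) (hd : 0 < d) (hL : 0 < L) (hH : D ≤ H)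
    (hγ : 0 < γ) (hγ1 : γ < 1) (hρ : 0 < ρ) (hlip : d < ρ → D ≤ L * d) :
    D / d ^ γ ≤ H ^ (1 - γ) * L ^ γ + H / ρ ^ γ := by
  have hH0 : 0 ≤ H := hD.trans hH
  have hdg : 0 < d ^ γ := Real.rpow_pos_of_pos hd γ
  have hrg : 0 < ρ ^ γ := Real.rpow_pos_of_pos hρ γ
  by_cases h : d < ρ
  · have h1 := hlip h
    have h2 : D = D ^ (1 - γ) * D ^ γ := by
      rw [← Real.rpow_add_of_nonneg hD (by linarith) hγ.le]
      simp
    have h3 : D ≤ H ^ (1 - γ) * (L ^ γ * d ^ γ) := by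
      rw [← Real.mul_rpow hL.le hd.le]
      calc D = D ^ (1 - γ) * D ^ γ := h2
        _ ≤ H ^ (1 - γ) * (L * d) ^ γ := by
          apply mul_le_mul
          · exact Real.rpow_le_rpow hD hH (by linarith)
          · exact Real.rpow_le_rpow hD h1 hγ.le
          · exact Real.rpow_nonneg hD _
          · exact Real.rpow_nonneg hH0 _
    have h4 : D / d ^ γ ≤ H ^ (1 - γ) * L ^ γ := by
      rw [div_le_iff₀ hdg]; linarith
    have : 0 ≤ H / ρ ^ γ := by positivity
    linarith
  · push Not at h
    have h1 : ρ ^ γ ≤ d ^ γ := Real.rpow_le_rpow hρ.le h hγ.le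
    have h2 : D / d ^ γ ≤ H / ρ ^ γ := by gcongr
    have : 0 ≤ H ^ (1 - γ) * L ^ γ := by positivity
    linarith

/-- Proposition 3.2: as `ε → 0⁺`, the zero-extensions `ũ^ε` converge to
`ψ(x) = ½xᵀAx + c` in `L¹_loc(ℝⁿ)` and in `C^{0,γ}_loc(ℝⁿ∖{x₀})` for every `0 < γ < 1`. -/
theorem statement14 (n k : ℕ) (hn : 3 ≤ n) (hk1 : 1 ≤ k) (hkn : 2 * k ≤ n)
    (a : Fin n → ℝ) (hA : MemA n k (Matrix.diagonal a))
    (hk1' : k = 1 → (⨆ i, a i) < 1 / 2)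
    (x₀ : Euc n) (hx₀ : x₀ ∈ Metric.ball (0 : Euc n) (1 / 2)) (hx₀' : x₀ ≠ 0) :
    ∃ cstar : ℝ, 0 < cstar ∧ ∀ c : ℝ, cstar ≤ c →
      ∀ u : ℝ → Euc n → ℝ,
        (∀ ε : ℝ, 0 < ε → ε < 1 / 2 → ExtBallSol n k a x₀ ε c (u ε)) →
        (∀ K : Set (Euc n), IsCompact K →
          Tendsto (fun ε : ℝ => ∫ x in K,
              |extBy n (Metric.ball x₀ ε) 0 (u ε) x -
                (quadA n (Matrix.diagonal a) x + c)|)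
            (𝓝[>] (0 : ℝ)) (𝓝 0)) ∧
        (∀ γ : ℝ, 0 < γ → γ < 1 →
          ∀ K : Set (Euc n), IsCompact K → K ⊆ {x₀}ᶜ →
            Tendsto (fun ε : ℝ => sSup ((fun x : Euc n =>
                |extBy n (Metric.ball x₀ ε) 0 (u ε) x -
                  (quadA n (Matrix.diagonal a) x + c)|) '' K))
              (𝓝[>] (0 : ℝ)) (𝓝 0) ∧
            Tendsto (fun ε : ℝ => sSup {d : ℝ | ∃ x ∈ K, ∃ y ∈ K, x ≠ y ∧
                d = |(extBy n (Metric.ball x₀ ε) 0 (u ε) x -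
                        (quadA n (Matrix.diagonal a) x + c)) -
                      (extBy n (Metric.ball x₀ ε) 0 (u ε) y -
                        (quadA n (Matrix.diagonal a) y + c))| / ‖x - y‖ ^ γ})
              (𝓝[>] (0 : ℝ)) (𝓝 0)) := by
  have ha : ∀ i, 0 < a i := Matrix.posDef_diagonal_iff.1 hA.2.1
  refine ⟨1, one_pos, fun c hc u hu => ?_⟩
  obtain ⟨C, hC, hkey⟩ := key_est n k hn hk1 hkn a ha hA.2.2 x₀ c (by linarith) u hu
  refine ⟨fun K hK => L1_part hx₀' hC hkey K hK, fun γ hγ hγ1 K hK hK0 => ?_⟩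
  obtain ⟨r, hr, hKr⟩ := away hK hK0
  have hun := unif_est hC hkey hr hKr
  obtain ⟨L, hL, hlip⟩ := lip_est hk1 (by omega) hC hkey hK hr hKr
  have hη : Tendsto (fun ε : ℝ => C / Real.arsinh ε⁻¹ * Real.arsinh r⁻¹)
      (𝓝[>] (0 : ℝ)) (𝓝 0) := by
    simpa using (arsinh_inv_tendsto C).mul_const (Real.arsinh r⁻¹)
  have hη0 : ∀ᶠ ε in 𝓝[>] (0 : ℝ), 0 ≤ C / Real.arsinh ε⁻¹ * Real.arsinh r⁻¹ := by
    filter_upwards [self_mem_nhdsWithin] with ε hε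
    have h1 := Real.arsinh_pos_iff.2 (inv_pos.2 (show 0 < ε from hε))
    have h2 := Real.arsinh_pos_iff.2 (inv_pos.2 hr)
    positivity
  constructor
  · refine squeeze_zero' (Eventually.of_forall fun ε => ?_) ?_ hη
    · apply Real.sSup_nonneg
      rintro _ ⟨x, _, rfl⟩
      exact abs_nonneg _
    · filter_upwards [hun, hη0] with ε h h0
      apply Real.sSup_le _ h0
      rintro _ ⟨x, hx, rfl⟩
      exact h x hx
  · have hE : Tendsto (fun ε : ℝ =>
        (2 * (C / Real.arsinh ε⁻¹ * Real.arsinh r⁻¹)) ^ (1 - γ) * L ^ γ +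
          (2 * (C / Real.arsinh ε⁻¹ * Real.arsinh r⁻¹)) / (r / 4) ^ γ)
        (𝓝[>] (0 : ℝ)) (𝓝 0) := by
      have h2 := hη.const_mul 2
      have h3 := (h2.rpow_const (p := 1 - γ) (Or.inr (by linarith))).mul_const (L ^ γ)
      have h4 := h3.add (h2.div_const ((r / 4) ^ γ))
      rw [mul_zero, Real.zero_rpow (by linarith), zero_mul, zero_div, add_zero] at h4
      exact h4
    refine squeeze_zero' (Eventually.of_forall fun ε => ?_) ?_ hE
    · apply Real.sSup_nonneg
      rintro _ ⟨x, _, y, _, _, rfl⟩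
      positivity
    · filter_upwards [hun, hlip, hη0] with ε h h' h0
      have hr4 : 0 < r / 4 := by linarith
      apply Real.sSup_le _ (by positivity)
      rintro _ ⟨x, hx, y, hy, hxy, rfl⟩
      refine holder_alg (abs_nonneg _) (norm_pos_iff.2 (sub_ne_zero.2 hxy)) hL ?_ hγ hγ1 hr4
        (h' x hx y hy)
      have h1 := h x hx
      have h2 := h y hy
      refine (abs_sub _ _).trans ?_
      linarith
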